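/- Let R_0 → R_1 → … → R_m be an arbitrary finite sequence of elementary moves of rectangular diagrams containing k stabilizations and ℓ destabilizations. Then there exists another finite sequence of elementary moves R_0 → R_1′ → … → R_n′ = R_m in which the first k moves are stabilizations, the last ℓ moves are destabilizations, and all other moves are cyclic permutations and commutations; moreover, the number of stabilizations and of destabilizations of each type (I and II) in the new sequence is the same as in the original one. -/

import Mathlib

noncomputable section
open scoped Classical

/-- A point of the plane. -/
abbrev Pt : Type := ℝ × ℝ

/-- A rectangular diagram: a finite set of points in the plane such that every
vertical or horizontal straight line contains either no points or exactly two points of it. -/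
def IsDiagram (R : Finset Pt) : Prop :=
  ∀ p ∈ R, (R.filter (fun q => q.1 = p.1)).card = 2 ∧
    (R.filter (fun q => q.2 = p.2)).card = 2

/-- The complexity of a rectangular diagram: the number of its vertical edges. -/
def complexity (R : Finset Pt) : ℕ := (R.image Prod.fst).card

/-- Moving the vertical line `x0` to position `x1` (all other points unchanged). -/
def vmap (x0 x1 : ℝ) : Pt → Pt := fun p => if p.1 = x0 then (x1, p.2) else p

/-- Moving the horizontal line `y0` to position `y1`. -/
def hmap (y0 y1 : ℝ) : Pt → Pt := fun p => if p.2 = y0 then (p.1, y1) else p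

/-- Exchanging the vertical lines `x1` and `x2`. -/
def swapv (x1 x2 : ℝ) : Pt → Pt := fun p =>
  if p.1 = x1 then (x2, p.2) else if p.1 = x2 then (x1, p.2) else p

/-- Exchanging the horizontal lines `y1` and `y2`. -/
def swaph (y1 y2 : ℝ) : Pt → Pt := fun p =>
  if p.2 = y1 then (p.1, y2) else if p.2 = y2 then (p.1, y1) else p

/-- `f` realizes a cyclic permutation on the finite set `R`:  an extreme (left/right/top/bottom)
edge is moved to the opposite side of the diagram. -/
def CyclicData (R : Finset Pt) (f : Pt → Pt) : Prop :=
  (∃ x0 x1 : ℝ, (∃ p ∈ R, p.1 = x0) ∧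
     (((∀ p ∈ R, x0 ≤ p.1) ∧ ∀ p ∈ R, p.1 ≠ x0 → p.1 < x1) ∨
      ((∀ p ∈ R, p.1 ≤ x0) ∧ ∀ p ∈ R, p.1 ≠ x0 → x1 < p.1)) ∧
     f = vmap x0 x1) ∨
  (∃ y0 y1 : ℝ, (∃ p ∈ R, p.2 = y0) ∧
     (((∀ p ∈ R, y0 ≤ p.2) ∧ ∀ p ∈ R, p.2 ≠ y0 → p.2 < y1) ∨
      ((∀ p ∈ R, p.2 ≤ y0) ∧ ∀ p ∈ R, p.2 ≠ y0 → y1 < p.2)) ∧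
     f = hmap y0 y1)

/-- The pairs of second coordinates of the points of `R` on the vertical lines `x1`, `x2`
do not interleave. -/
def NoInterleaveV (R : Finset Pt) (x1 x2 : ℝ) : Prop :=
  ∀ p ∈ R, ∀ p' ∈ R, ∀ q ∈ R, ∀ q' ∈ R,
    p.1 = x1 → p'.1 = x1 → q.1 = x2 → q'.1 = x2 →
    ¬ ((p.2 < q.2 ∧ q.2 < p'.2 ∧ p'.2 < q'.2) ∨
       (q.2 < p.2 ∧ p.2 < q'.2 ∧ q'.2 < p'.2))

/-- The pairs of first coordinates of the points of `R` on the horizontal lines `y1`, `y2`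
do not interleave. -/
def NoInterleaveH (R : Finset Pt) (y1 y2 : ℝ) : Prop :=
  ∀ p ∈ R, ∀ p' ∈ R, ∀ q ∈ R, ∀ q' ∈ R,
    p.2 = y1 → p'.2 = y1 → q.2 = y2 → q'.2 = y2 →
    ¬ ((p.1 < q.1 ∧ q.1 < p'.1 ∧ p'.1 < q'.1) ∨
       (q.1 < p.1 ∧ p.1 < q'.1 ∧ q'.1 < p'.1))

/-- `f` realizes a commutation on `R`: two neighboring parallel edges, whose pairs of endpoints
projected to the common axis are disjoint and do not interleave, are exchanged. -/
def CommData (R : Finset Pt) (f : Pt → Pt) : Prop :=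
  (∃ x1 x2 : ℝ, x1 ≠ x2 ∧ (∃ p ∈ R, p.1 = x1) ∧ (∃ p ∈ R, p.1 = x2) ∧
     (∀ p ∈ R, ¬ (min x1 x2 < p.1 ∧ p.1 < max x1 x2)) ∧
     (∀ p ∈ R, ∀ q ∈ R, p.1 = x1 → q.1 = x2 → p.2 ≠ q.2) ∧
     NoInterleaveV R x1 x2 ∧ f = swapv x1 x2) ∨
  (∃ y1 y2 : ℝ, y1 ≠ y2 ∧ (∃ p ∈ R, p.2 = y1) ∧ (∃ p ∈ R, p.2 = y2) ∧
     (∀ p ∈ R, ¬ (min y1 y2 < p.2 ∧ p.2 < max y1 y2)) ∧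
     (∀ p ∈ R, ∀ q ∈ R, p.2 = y1 → q.2 = y2 → p.1 ≠ q.1) ∧
     NoInterleaveH R y1 y2 ∧ f = swaph y1 y2)

/-- A cyclic permutation move of rectangular diagrams. -/
def CyclicMove (R R' : Finset Pt) : Prop :=
  IsDiagram R ∧ IsDiagram R' ∧ ∃ f, CyclicData R f ∧ R' = R.image f

/-- A commutation move of rectangular diagrams. -/
def CommMove (R R' : Finset Pt) : Prop :=
  IsDiagram R ∧ IsDiagram R' ∧ ∃ f, CommData R f ∧ R' = R.image f

/-- The type of a stabilization/destabilization. -/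
inductive StabType
  | I : StabType
  | II : StabType
deriving DecidableEq

/-- Result of replacing the vertex `(x, y)` by the three other vertices of the small square
with corners `(x, y)`, `(x', y)`, `(x, y')`, `(x', y')`. -/
def stabSet (x y x' y' : ℝ) (C : Finset Pt) : Finset Pt :=
  insert ((x', y) : Pt) (insert ((x, y') : Pt) (insert ((x', y') : Pt) (C.erase (x, y))))

/-- The data of a stabilization of `R` at the vertex `(x, y)`, yielding `R'`:  the vertex is
replaced by the three other corners of a small square (`x'`, `y'` are fresh coordinates,
and no coordinate of `R` lies strictly between `x, x'` nor between `y, y'`). -/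
def StabData (x y x' y' : ℝ) (R R' : Finset Pt) : Prop :=
  (x, y) ∈ R ∧ x ≠ x' ∧ y ≠ y' ∧
  (∀ p ∈ R, p.1 ≠ x') ∧ (∀ p ∈ R, p.2 ≠ y') ∧
  (∀ p ∈ R, ¬ (min x x' < p.1 ∧ p.1 < max x x')) ∧
  (∀ p ∈ R, ¬ (min y y' < p.2 ∧ p.2 < max y y')) ∧
  R' = stabSet x y x' y' R

/-- A stabilization of type `t` occurring at the vertex `v` of `R`.  The type is I when the two
new short edges point from their common vertex downward-and-leftward or upward-and-rightward. -/
def StabMoveAt (t : StabType) (v : Pt) (R R' : Finset Pt) : Prop :=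
  IsDiagram R ∧ IsDiagram R' ∧
  ∃ x' y' : ℝ, StabData v.1 v.2 x' y' R R' ∧
    (t = StabType.I ↔ 0 < (v.1 - x') * (v.2 - y'))

/-- A stabilization of type `t`. -/
def StabMove (t : StabType) (R R' : Finset Pt) : Prop :=
  ∃ v : Pt, StabMoveAt t v R R'

/-- A complexity-preserving elementary move: a cyclic permutation or a commutation. -/
def ExchangeMove (R R' : Finset Pt) : Prop := CyclicMove R R' ∨ CommMove R R'

/-- An elementary move of rectangular diagrams: a cyclic permutation, a commutation,
a stabilization or a destabilization. -/
def ElemMove (R R' : Finset Pt) : Prop :=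
  CyclicMove R R' ∨ CommMove R R' ∨ ∃ t, StabMove t R R' ∨ StabMove t R' R

/-- An elementary move involving no stabilization or destabilization of type other than `t`. -/
def LegMove (t : StabType) (R R' : Finset Pt) : Prop :=
  CyclicMove R R' ∨ CommMove R R' ∨ StabMove t R R' ∨ StabMove t R' R

/-- Legendrian equivalence: connected by a finite sequence of elementary moves containing
no type II stabilizations or destabilizations. -/
def LegEquiv : Finset Pt → Finset Pt → Prop :=
  Relation.ReflTransGen (LegMove StabType.I)

/-- Connected by a finite sequence of elementary moves containing
no type I stabilizations or destabilizations. -/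
def MirrorEquiv : Finset Pt → Finset Pt → Prop :=
  Relation.ReflTransGen (LegMove StabType.II)

/-- An elementary simplification of type `t` : a finite sequence of cyclic permutations and
commutations followed by one destabilization of type `t`. -/
def ElemSimp (t : StabType) (R R' : Finset Pt) : Prop :=
  ∃ S, Relation.ReflTransGen ExchangeMove R S ∧ StabMove t R' S
/-- A label for an elementary move. -/
inductive MoveLabel
  | cyclic : MoveLabel
  | comm : MoveLabel
  | stab : StabType → MoveLabel
  | destab : StabType → MoveLabel
deriving DecidableEq

/-- The move relation named by a label. -/
def LMove : MoveLabel → Finset Pt → Finset Pt → Prop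
  | .cyclic => CyclicMove
  | .comm => CommMove
  | .stab t => StabMove t
  | .destab t => fun R R' => StabMove t R' R

/-- `IsMoveSeq L R R'` : the list of labeled elementary moves `L` transforms `R` into `R'`. -/
def IsMoveSeq : List MoveLabel → Finset Pt → Finset Pt → Prop
  | [], R, R' => R = R'
  | (l :: ls), R, R' => ∃ S, LMove l R S ∧ IsMoveSeq ls S R'


/-! ### Helper lemmas -/

abbrev EE : Finset Pt → Finset Pt → Prop := Relation.ReflTransGen ExchangeMove

theorem card2_iff (F : Finset Pt) (p : Pt) (hp : p ∈ F) :
    F.card = 2 ↔ ∃ q, q ≠ p ∧ ∀ z, z ∈ F ↔ z = p ∨ z = q := by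
  constructor
  · intro h
    obtain ⟨a, b, hab, rfl⟩ := Finset.card_eq_two.1 h
    simp only [Finset.mem_insert, Finset.mem_singleton] at hp
    rcases hp with rfl | rfl
    · exact ⟨b, hab.symm, by simp⟩
    · exact ⟨a, hab, by simp [or_comm]⟩
  · rintro ⟨q, hq, h⟩
    have : F = {p, q} := by ext z; simp [h]
    rw [this, Finset.card_pair hq.symm]

theorem isDiag_iff (R : Finset Pt) : IsDiagram R ↔ ∀ a b, (a, b) ∈ R →
    (∃ y, y ≠ b ∧ ∀ z, (a, z) ∈ R ↔ z = b ∨ z = y) ∧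
    (∃ x, x ≠ a ∧ ∀ z, (z, b) ∈ R ↔ z = a ∨ z = x) := by
  unfold IsDiagram
  constructor
  · intro h a b hab
    obtain ⟨h1, h2⟩ := h _ hab
    rw [card2_iff _ (a, b) (by simp [hab])] at h1 h2
    obtain ⟨⟨q1, q2⟩, hq, h1⟩ := h1
    obtain ⟨⟨r1, r2⟩, hr, h2⟩ := h2
    simp only [Finset.mem_filter, Prod.forall, Prod.mk.injEq] at h1 h2
    constructor
    · refine ⟨q2, ?_, ?_⟩
      · grind
      · grind
    · refine ⟨r1, ?_, ?_⟩
      · grind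
      · grind
  · rintro h ⟨a, b⟩ hab
    obtain ⟨⟨y, hy, h1⟩, ⟨x, hx, h2⟩⟩ := h _ _ hab
    rw [card2_iff _ (a, b) (by simp [hab]), card2_iff _ (a, b) (by simp [hab])]
    refine ⟨⟨(a, y), by simpa using hy, ?_⟩, ⟨(x, b), by simpa using hx, ?_⟩⟩
    · simp only [Finset.mem_filter, Prod.forall, Prod.mk.injEq]
      grind
    · simp only [Finset.mem_filter, Prod.forall, Prod.mk.injEq]
      grind

/-! transposition -/

def T (R : Finset Pt) : Finset Pt := R.image Prod.swap

theorem mem_T (R : Finset Pt) (a b : ℝ) : (a, b) ∈ T R ↔ (b, a) ∈ R := by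
  unfold T; simp [Finset.mem_image]

theorem T_T (R : Finset Pt) : T (T R) = R := by
  ext ⟨a, b⟩; simp [mem_T]

theorem diag_T {R : Finset Pt} (h : IsDiagram R) : IsDiagram (T R) := by
  rw [isDiag_iff] at *
  intro a b hab
  rw [mem_T] at hab
  simp only [mem_T]
  exact (h _ _ hab).symm

theorem T_image (R : Finset Pt) (f : Pt → Pt) :
    T (R.image f) = (T R).image (Prod.swap ∘ f ∘ Prod.swap) := by
  unfold T
  rw [Finset.image_image, Finset.image_image]
  congr 1

theorem vmap_T (a b : ℝ) : Prod.swap ∘ vmap a b ∘ Prod.swap = hmap a b := by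
  funext ⟨p, q⟩; simp only [vmap, hmap, Function.comp, Prod.swap]; split_ifs <;> rfl
theorem hmap_T (a b : ℝ) : Prod.swap ∘ hmap a b ∘ Prod.swap = vmap a b := by
  funext ⟨p, q⟩; simp only [vmap, hmap, Function.comp, Prod.swap]; split_ifs <;> rfl
theorem swapv_T (a b : ℝ) : Prod.swap ∘ swapv a b ∘ Prod.swap = swaph a b := by
  funext ⟨p, q⟩; simp only [swapv, swaph, Function.comp, Prod.swap]; split_ifs <;> rfl
theorem swaph_T (a b : ℝ) : Prod.swap ∘ swaph a b ∘ Prod.swap = swapv a b := by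
  funext ⟨p, q⟩; simp only [swapv, swaph, Function.comp, Prod.swap]; split_ifs <;> rfl

theorem forall_T (R : Finset Pt) (P : Pt → Prop) :
    (∀ p ∈ T R, P p) ↔ ∀ p ∈ R, P p.swap := by
  unfold T; exact Finset.forall_mem_image

theorem exists_T (R : Finset Pt) (P : Pt → Prop) :
    (∃ p ∈ T R, P p) ↔ ∃ p ∈ R, P p.swap := by
  unfold T; exact Finset.exists_mem_image

theorem cyclic_T {R R' : Finset Pt} (h : CyclicMove R R') : CyclicMove (T R) (T R') := by
  obtain ⟨h1, h2, f, hf, rfl⟩ := h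
  refine ⟨diag_T h1, diag_T h2, Prod.swap ∘ f ∘ Prod.swap, ?_, T_image R f⟩
  unfold CyclicData at *
  simp only [forall_T, exists_T, Prod.fst_swap, Prod.snd_swap]
  rcases hf with ⟨x0, x1, ha, hb, rfl⟩ | ⟨x0, x1, ha, hb, rfl⟩
  · exact Or.inr ⟨x0, x1, ha, hb, vmap_T _ _⟩
  · exact Or.inl ⟨x0, x1, ha, hb, hmap_T _ _⟩

theorem comm_T {R R' : Finset Pt} (h : CommMove R R') : CommMove (T R) (T R') := by
  obtain ⟨h1, h2, f, hf, rfl⟩ := h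
  refine ⟨diag_T h1, diag_T h2, Prod.swap ∘ f ∘ Prod.swap, ?_, T_image R f⟩
  unfold CommData NoInterleaveV NoInterleaveH at *
  simp only [forall_T, exists_T, Prod.fst_swap, Prod.snd_swap]
  rcases hf with ⟨x0, x1, hn, ha, hb, hc, hd, he, rfl⟩ | ⟨x0, x1, hn, ha, hb, hc, hd, he, rfl⟩
  · exact Or.inr ⟨x0, x1, hn, ha, hb, hc, hd, he, swapv_T _ _⟩
  · exact Or.inl ⟨x0, x1, hn, ha, hb, hc, hd, he, swaph_T _ _⟩

theorem exch_T {R R' : Finset Pt} (h : ExchangeMove R R') : ExchangeMove (T R) (T R') :=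
  h.imp cyclic_T comm_T

theorem EE_T {R R' : Finset Pt} (h : EE R R') : EE (T R) (T R') :=
  by
  induction h with
  | refl => exact .refl
  | tail _ h ih => exact ih.tail (exch_T h)

theorem stabSet_T (x y x' y' : ℝ) (R : Finset Pt) :
    T (stabSet x y x' y' R) = stabSet y x y' x' (T R) := by
  ext ⟨a, b⟩
  simp only [mem_T, stabSet, Finset.mem_insert, Finset.mem_erase, Prod.mk.injEq, ne_eq]
  tauto

/-! diagrams are preserved -/

theorem diag_rename {R : Finset Pt} (hR : IsDiagram R) (g : ℝ → ℝ)
    (hg : ∀ p ∈ R, ∀ q ∈ R, g p.1 = g q.1 → p.1 = q.1) :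
    IsDiagram (R.image (fun p => (g p.1, p.2))) := by
  have key : ∀ a b c, (a, b) ∈ R → ((g a, c) ∈ R.image (fun p => (g p.1, p.2)) ↔ (a, c) ∈ R) := by
    intro a b c hab
    simp only [Finset.mem_image, Prod.mk.injEq, Prod.exists]
    constructor
    · rintro ⟨a', b', h, h1, rfl⟩
      have := hg _ h _ hab h1
      simp only at this
      rwa [← this]
    · intro h; exact ⟨a, c, h, rfl, rfl⟩
  rw [isDiag_iff] at *
  intro a b hab
  simp only [Finset.mem_image, Prod.mk.injEq, Prod.exists] at hab
  obtain ⟨a', b', h, rfl, rfl⟩ := hab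
  obtain ⟨⟨y, hy, h1⟩, ⟨x, hx, h2⟩⟩ := hR _ _ h
  refine ⟨⟨y, hy, fun z => by rw [key _ _ _ h]; exact h1 z⟩, g x, ?_, ?_⟩
  · intro e
    exact hx (hg _ ((h2 x).2 (Or.inr rfl)) _ h e)
  · intro z
    simp only [Finset.mem_image, Prod.mk.injEq, Prod.exists]
    constructor
    · rintro ⟨a, b, hab, rfl, rfl⟩
      rcases (h2 a).1 hab with rfl | rfl <;> simp
    · rintro (rfl | rfl)
      · exact ⟨_, _, h, rfl, rfl⟩
      · exact ⟨_, _, (h2 x).2 (Or.inr rfl), rfl, rfl⟩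

theorem diag_vmap {R : Finset Pt} (hR : IsDiagram R) (x0 x1 : ℝ) (hf : ∀ p ∈ R, p.1 ≠ x1) :
    IsDiagram (R.image (vmap x0 x1)) := by
  have : vmap x0 x1 = fun p => ((fun x => if x = x0 then x1 else x) p.1, p.2) := by
    funext ⟨a, b⟩; simp only [vmap]; split_ifs <;> rfl
  rw [this]
  refine diag_rename hR (fun x => if x = x0 then x1 else x) ?_
  intro p hp q hq
  have := hf _ hp
  have := hf _ hq
  grind

theorem diag_swapv {R : Finset Pt} (hR : IsDiagram R) (x0 x1 : ℝ) :
    IsDiagram (R.image (swapv x0 x1)) := by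
  have : swapv x0 x1 = fun p => ((fun x => if x = x0 then x1 else if x = x1 then x0 else x) p.1, p.2) := by
    funext ⟨a, b⟩; simp only [swapv]; split_ifs <;> rfl
  rw [this]
  refine diag_rename hR (fun x => if x = x0 then x1 else if x = x1 then x0 else x) ?_
  intro p hp q hq
  grind

theorem mem_vmap {R : Finset Pt} {x0 x1 : ℝ} (hf : ∀ p ∈ R, p.1 ≠ x1) (a b : ℝ) :
    (a, b) ∈ R.image (vmap x0 x1) ↔ (a = x1 ∧ (x0, b) ∈ R) ∨ (a ≠ x0 ∧ (a, b) ∈ R) := by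
  simp only [Finset.mem_image, vmap, Prod.exists]
  constructor
  · rintro ⟨c, d, h, e⟩
    split_ifs at e with h1
    · simp only [Prod.mk.injEq] at e; grind
    · simp only [Prod.mk.injEq] at e; grind
  · rintro (⟨rfl, h⟩ | ⟨h1, h⟩)
    · exact ⟨_, _, h, by simp⟩
    · exact ⟨_, _, h, by simp [h1]⟩

theorem mem_swapv {R : Finset Pt} {x0 x1 : ℝ} (a b : ℝ) :
    (a, b) ∈ R.image (swapv x0 x1) ↔ 
     (a = x0 ∧ (x1, b) ∈ R) ∨ (a = x1 ∧ (x0, b) ∈ R) ∨ (a ≠ x0 ∧ a ≠ x1 ∧ (a, b) ∈ R) := by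
  simp only [Finset.mem_image, swapv, Prod.exists]
  constructor
  · rintro ⟨c, d, h, e⟩
    split_ifs at e with h1 <;> simp only [Prod.mk.injEq] at e <;> grind
  · rintro (⟨rfl, h⟩ | ⟨rfl, h⟩ | ⟨h1, h2, h⟩)
    · exact ⟨_, _, h, by simp⟩
    · exact ⟨_, _, h, by simp⟩
    · exact ⟨_, _, h, by simp [h1, h2]⟩

/-! symmetry of exchange moves -/

theorem exists_other_col {R : Finset Pt} (hR : IsDiagram R) {x0 : ℝ} (h : ∃ p ∈ R, p.1 = x0) :
    ∃ p ∈ R, p.1 ≠ x0 := by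
  obtain ⟨⟨a, b⟩, hp, rfl⟩ := h
  obtain ⟨_, x, hx, h⟩ := (isDiag_iff R).1 hR _ _ hp
  exact ⟨(x, b), (h x).2 (Or.inr rfl), hx⟩

theorem image_id_of {R : Finset Pt} {f : Pt → Pt} (h : ∀ p ∈ R, f p = p) : R.image f = R := by
  conv_rhs => rw [← Finset.image_id (s := R)]
  exact Finset.image_congr (fun p hp => by simpa using h p hp)

theorem cyc_symm_v {R R' : Finset Pt} (h1 : IsDiagram R) (h2 : IsDiagram R') (x0 x1 : ℝ)
    (hx : ∃ p ∈ R, p.1 = x0)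
    (h : ((∀ p ∈ R, x0 ≤ p.1) ∧ ∀ p ∈ R, p.1 ≠ x0 → p.1 < x1) ∨
      ((∀ p ∈ R, p.1 ≤ x0) ∧ ∀ p ∈ R, p.1 ≠ x0 → x1 < p.1))
    (he : R' = R.image (vmap x0 x1)) : CyclicMove R' R := by
  obtain ⟨q, hq, hq0⟩ := exists_other_col h1 hx
  have hf : ∀ p ∈ R, p.1 ≠ x1 := by
    intro p hp
    rcases h with ⟨ha, hb⟩ | ⟨ha, hb⟩
    · have := ha q hq; have := hb q hq hq0; have := hb p hp; grind
    · have := ha q hq; have := hb q hq hq0; have := hb p hp; grind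
  have hm : ∀ a b, (a, b) ∈ R' ↔ (a = x1 ∧ (x0, b) ∈ R) ∨ (a ≠ x0 ∧ (a, b) ∈ R) :=
    fun a b => by rw [he]; exact mem_vmap hf a b
  refine ⟨h2, h1, vmap x1 x0, Or.inl ⟨x1, x0, ?_, ?_, rfl⟩, ?_⟩
  · obtain ⟨⟨a, b⟩, hp, rfl⟩ := hx
    exact ⟨(x1, b), (hm _ _).2 (Or.inl ⟨rfl, hp⟩), rfl⟩
  · rcases h with ⟨ha, hb⟩ | ⟨ha, hb⟩
    · right
      have := ha q hq; have := hb q hq hq0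
      constructor
      · rintro ⟨a, b⟩ hp
        rcases (hm _ _).1 hp with ⟨rfl, h⟩ | ⟨h3, h⟩
        · exact le_rfl
        · exact (hb _ h h3).le
      · rintro ⟨a, b⟩ hp h4
        rcases (hm _ _).1 hp with ⟨rfl, h⟩ | ⟨h3, h⟩
        · exact absurd rfl h4
        · exact lt_of_le_of_ne (ha _ h) (Ne.symm h3)
    · left
      have := ha q hq; have := hb q hq hq0
      constructor
      · rintro ⟨a, b⟩ hp
        rcases (hm _ _).1 hp with ⟨rfl, h⟩ | ⟨h3, h⟩
        · exact le_rfl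
        · exact (hb _ h h3).le
      · rintro ⟨a, b⟩ hp h4
        rcases (hm _ _).1 hp with ⟨rfl, h⟩ | ⟨h3, h⟩
        · exact absurd rfl h4
        · exact lt_of_le_of_ne (ha _ h) h3
  · rw [he, Finset.image_image]
    symm; apply image_id_of
    rintro ⟨a, b⟩ hp
    have := hf _ hp
    simp only [Function.comp, vmap]
    grind

theorem cyc_symm {R R' : Finset Pt} (h : CyclicMove R R') : CyclicMove R' R := by
  obtain ⟨h1, h2, f, hf, he⟩ := id h
  rcases hf with ⟨x0, x1, ha, hb, rfl⟩ | ⟨x0, x1, ha, hb, rfl⟩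
  · exact cyc_symm_v h1 h2 x0 x1 ha hb he
  · rw [← T_T R, ← T_T R']
    apply cyclic_T
    refine cyc_symm_v (diag_T h1) (diag_T h2) x0 x1 ?_ ?_ ?_
    · simpa only [exists_T, Prod.fst_swap]
    · simpa only [forall_T, Prod.fst_swap]
    · rw [he, T_image, hmap_T]

theorem comm_symm_v {R R' : Finset Pt} (h1 : IsDiagram R) (h2 : IsDiagram R') (x1 x2 : ℝ)
    (hn : x1 ≠ x2) (ha : ∃ p ∈ R, p.1 = x1) (hb : ∃ p ∈ R, p.1 = x2)
    (hc : ∀ p ∈ R, ¬ (min x1 x2 < p.1 ∧ p.1 < max x1 x2))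
    (hd : ∀ p ∈ R, ∀ q ∈ R, p.1 = x1 → q.1 = x2 → p.2 ≠ q.2)
    (hi : NoInterleaveV R x1 x2) (he : R' = R.image (swapv x1 x2)) : CommMove R' R := by
  have hm : ∀ a b, (a, b) ∈ R' ↔ (a = x1 ∧ (x2, b) ∈ R) ∨ (a = x2 ∧ (x1, b) ∈ R) ∨
      (a ≠ x1 ∧ a ≠ x2 ∧ (a, b) ∈ R) := fun a b => by rw [he]; exact mem_swapv a b
  have hm1 : ∀ b, (x1, b) ∈ R' ↔ (x2, b) ∈ R := by intro b; rw [hm]; clear * - hn; grind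
  have hm2 : ∀ b, (x2, b) ∈ R' ↔ (x1, b) ∈ R := by intro b; rw [hm]; clear * - hn; grind
  refine ⟨h2, h1, swapv x1 x2, Or.inl ⟨x1, x2, hn, ?_, ?_, ?_, ?_, ?_, rfl⟩, ?_⟩
  · obtain ⟨⟨a, b⟩, hp, rfl⟩ := hb
    exact ⟨(x1, b), (hm1 _).2 hp, rfl⟩
  · obtain ⟨⟨a, b⟩, hp, rfl⟩ := ha
    exact ⟨(x2, b), (hm2 _).2 hp, rfl⟩
  · rintro ⟨a, b⟩ hp
    rcases (hm _ _).1 hp with ⟨rfl, h⟩ | ⟨rfl, h⟩ | ⟨_, _, h⟩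
    · simp; exact le_of_lt
    · simp; exact le_of_lt
    · exact hc _ h
  · rintro ⟨a, b⟩ hp ⟨c, d⟩ hq e1 e2
    simp only at e1 e2
    subst e1 e2
    rw [hm1] at hp; rw [hm2] at hq
    exact (hd _ hq _ hp rfl rfl).symm
  · rintro ⟨a, b⟩ hp ⟨a', b'⟩ hp' ⟨c, d⟩ hq ⟨c', d'⟩ hq' e1 e2 e3 e4
    simp only at e1 e2 e3 e4
    subst e1 e2 e3 e4
    rw [hm1] at hp hp'; rw [hm2] at hq hq'
    have := hi _ hq _ hq' _ hp _ hp' rfl rfl rfl rfl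
    exact fun h => this h.symm
  · rw [he, Finset.image_image]
    symm; apply image_id_of
    rintro ⟨a, b⟩ hp
    simp only [Function.comp, swapv]
    grind

theorem comm_symm {R R' : Finset Pt} (h : CommMove R R') : CommMove R' R := by
  obtain ⟨h1, h2, f, hf, he⟩ := id h
  rcases hf with ⟨x0, x1, hn, ha, hb, hc, hd, hi, rfl⟩ | ⟨x0, x1, hn, ha, hb, hc, hd, hi, rfl⟩
  · exact comm_symm_v h1 h2 x0 x1 hn ha hb hc hd hi he
  · rw [← T_T R, ← T_T R']
    apply comm_T
    refine comm_symm_v (diag_T h1) (diag_T h2) x0 x1 hn ?_ ?_ ?_ ?_ ?_ ?_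
    · simpa only [exists_T, Prod.fst_swap]
    · simpa only [exists_T, Prod.fst_swap]
    · simpa only [forall_T, Prod.fst_swap]
    · simpa only [forall_T, Prod.fst_swap]
    · unfold NoInterleaveV; unfold NoInterleaveH at hi
      simpa only [forall_T, Prod.fst_swap]
    · rw [he, T_image, swaph_T]

theorem exch_symm {R R' : Finset Pt} (h : ExchangeMove R R') : ExchangeMove R' R :=
  h.imp cyc_symm comm_symm

theorem EE_symm {R R' : Finset Pt} (h : EE R R') : EE R' R := by
  induction h with
  | refl => exact .refl
  | tail _ h ih => exact .head (exch_symm h) ih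

/-! moving a column -/

def Bet (x0 x1 c : ℝ) : Prop := (x0 < c ∧ c < x1) ∨ (x1 < c ∧ c < x0)

theorem exists_big (R : Finset Pt) (z : ℝ) : ∃ M, z < M ∧ ∀ p ∈ R, p.1 < M := by
  obtain ⟨M, hM⟩ := Finset.exists_le (insert z (R.image Prod.fst))
  refine ⟨M + 1, ?_, ?_⟩
  · have := hM z (by simp); linarith
  · intro p hp
    have := hM p.1 (Finset.mem_insert_of_mem (Finset.mem_image_of_mem _ hp)); linarith

theorem exists_small (R : Finset Pt) (z : ℝ) : ∃ M, M < z ∧ ∀ p ∈ R, M < p.1 := by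
  obtain ⟨M, hM⟩ : ∃ M, ∀ r ∈ insert z (R.image Prod.fst), M ≤ r := by
    obtain ⟨M, hM⟩ := (insert z (R.image Prod.fst)).bddBelow
    exact ⟨M, fun r hr => hM hr⟩
  refine ⟨M - 1, ?_, ?_⟩
  · have := hM z (by simp); linarith
  · intro p hp
    have := hM p.1 (Finset.mem_insert_of_mem (Finset.mem_image_of_mem _ hp)); linarith

theorem tiny (F : Finset ℝ) (x z : ℝ) (h : z ≠ x) : ∃ x',
    (x < z ∧ x < x' ∧ ∀ r ∈ F, r ≤ x ∨ x' < r) ∨ (z < x ∧ x' < x ∧ ∀ r ∈ F, x ≤ r ∨ r < x') := by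
  rcases lt_or_gt_of_ne h with h | h
  · have : ∃ x' < x, ∀ r ∈ F, x ≤ r ∨ r < x' := by
      clear h
      induction F using Finset.induction_on with
      | empty => exact ⟨x - 1, by linarith, by simp⟩
      | insert a s ha ih =>
        obtain ⟨x', h1, h2⟩ := ih
        by_cases hax : x ≤ a
        · exact ⟨x', h1, by grind⟩
        · refine ⟨max x' ((a + x) / 2), by grind, ?_⟩
          intro r hr
          rcases Finset.mem_insert.1 hr with rfl | hr
          · right; apply lt_max_of_lt_right; linarith
          · rcases h2 r hr with h | h
            · exact Or.inl h
            · exact Or.inr (lt_max_of_lt_left h)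
    obtain ⟨x', h1, h2⟩ := this
    exact ⟨x', Or.inr ⟨h, h1, h2⟩⟩
  · have : ∃ x' > x, ∀ r ∈ F, r ≤ x ∨ x' < r := by
      clear h
      induction F using Finset.induction_on with
      | empty => exact ⟨x + 1, by linarith, by simp⟩
      | insert a s ha ih =>
        obtain ⟨x', h1, h2⟩ := ih
        by_cases hax : a ≤ x
        · exact ⟨x', h1, by grind⟩
        · refine ⟨min x' ((a + x) / 2), by grind, ?_⟩
          intro r hr
          rcases Finset.mem_insert.1 hr with rfl | hr
          · right; apply min_lt_of_right_lt; linarith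
          · rcases h2 r hr with h | h
            · exact Or.inl h
            · exact Or.inr (min_lt_of_left_lt h)
    obtain ⟨x', h1, h2⟩ := this
    exact ⟨x', Or.inl ⟨h, h1, h2⟩⟩

theorem cyc_right {R : Finset Pt} (hR : IsDiagram R) {x0 M : ℝ} (hx : ∃ p ∈ R, p.1 = x0)
    (h1 : ∀ p ∈ R, x0 ≤ p.1) (h2 : ∀ p ∈ R, p.1 < M) : EE R (R.image (vmap x0 M)) :=
  .single (Or.inl ⟨hR, diag_vmap hR _ _ (fun p hp => (h2 p hp).ne), _,
    Or.inl ⟨x0, M, hx, Or.inl ⟨h1, fun p hp _ => h2 p hp⟩, rfl⟩, rfl⟩)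

theorem cyc_left {R : Finset Pt} (hR : IsDiagram R) {x0 M : ℝ} (hx : ∃ p ∈ R, p.1 = x0)
    (h1 : ∀ p ∈ R, p.1 ≤ x0) (h2 : ∀ p ∈ R, M < p.1) : EE R (R.image (vmap x0 M)) :=
  .single (Or.inl ⟨hR, diag_vmap hR _ _ (fun p hp => (h2 p hp).ne'), _,
    Or.inl ⟨x0, M, hx, Or.inr ⟨h1, fun p hp _ => h2 p hp⟩, rfl⟩, rfl⟩)

theorem col_vmap {R : Finset Pt} {x0 : ℝ} (x1 : ℝ) (hx : ∃ p ∈ R, p.1 = x0) :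
    ∃ p ∈ R.image (vmap x0 x1), p.1 = x1 := by
  obtain ⟨p, hp, rfl⟩ := hx
  exact ⟨_, Finset.mem_image_of_mem _ hp, by simp [vmap]⟩

theorem col_vmap' {R : Finset Pt} {x0 x1 c : ℝ} (hc : c ≠ x0) (hx : ∃ p ∈ R, p.1 = c) :
    ∃ p ∈ R.image (vmap x0 x1), p.1 = c := by
  obtain ⟨p, hp, rfl⟩ := hx
  exact ⟨_, Finset.mem_image_of_mem _ hp, by simp [vmap, hc]⟩

theorem forall_vmap {R : Finset Pt} {x0 x1 : ℝ} {P : Pt → Prop}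
    (h : ∀ p ∈ R, (p.1 = x0 → P (x1, p.2)) ∧ (p.1 ≠ x0 → P p)) :
    ∀ p ∈ R.image (vmap x0 x1), P p := by
  rw [Finset.forall_mem_image]
  intro p hp
  have := h p hp
  unfold vmap
  split_ifs with h1
  · exact this.1 h1
  · exact this.2 h1

theorem vmap_vmap {R : Finset Pt} {x0 M x1 : ℝ} (h : ∀ p ∈ R, p.1 ≠ M) :
    (R.image (vmap x0 M)).image (vmap M x1) = R.image (vmap x0 x1) := by
  rw [Finset.image_image]
  apply Finset.image_congr
  rintro ⟨a, b⟩ hp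
  have h1 : a ≠ M := h _ hp
  simp only [Function.comp, vmap]
  by_cases h2 : a = x0
  · simp [h2]
  · simp [h1, h2]

theorem gap_v (n : ℕ) : ∀ {R : Finset Pt} (_ : IsDiagram R) {x0 x1 : ℝ} (_ : ∃ p ∈ R, p.1 = x0)
    (_ : ∀ p ∈ R, p.1 ≠ x1) (_ : ∀ p ∈ R, ¬ Bet x0 x1 p.1)
    (_ : ((R.image Prod.fst).filter (· < x0)).card ≤ n), EE R (R.image (vmap x0 x1)) := by
  induction n with
  | zero =>
    intro R hR x0 x1 hx hf hb hn
    have hl : ∀ p ∈ R, x0 ≤ p.1 := by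
      intro p hp
      by_contra h
      have : p.1 ∈ ((R.image Prod.fst).filter (· < x0)) := by
        simp only [Finset.mem_filter]
        exact ⟨Finset.mem_image_of_mem _ hp, not_le.1 h⟩
      rw [Finset.card_eq_zero.1 (Nat.le_zero.1 hn)] at this
      simp at this
    obtain ⟨M, hM, hM'⟩ := exists_big R x1
    have hR' := diag_vmap hR x0 M (fun p hp => (hM' p hp).ne)
    have s1 := cyc_right hR hx hl hM'
    have s2 : EE (R.image (vmap x0 M)) ((R.image (vmap x0 M)).image (vmap M x1)) := by
      apply cyc_left hR' (col_vmap _ hx)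
      · apply forall_vmap
        intro p hp; exact ⟨fun _ => le_rfl, fun _ => (hM' p hp).le⟩
      · apply forall_vmap
        intro p hp
        have a1 := hb p hp; have a2 := hf p hp; have a3 := hl p hp
        refine ⟨fun _ => hM, fun h => ?_⟩
        unfold Bet at a1
        grind
    refine (s1.trans s2).trans ?_
    rw [vmap_vmap (fun p hp => (hM' p hp).ne)]
  | succ n ih =>
    intro R hR x0 x1 hx hf hb hn
    by_cases hn' : ((R.image Prod.fst).filter (· < x0)).card ≤ n
    · exact ih hR hx hf hb hn'
    have hne : ((R.image Prod.fst).filter (· < x0)).Nonempty := by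
      rw [← Finset.card_pos]; omega
    obtain ⟨m, hm, hmin⟩ := Finset.exists_min_image _ id hne
    simp only [Finset.mem_filter, id, Finset.mem_image] at hm hmin
    obtain ⟨⟨q, hq, rfl⟩, hm0⟩ := hm
    have hl : ∀ p ∈ R, q.1 ≤ p.1 := by
      intro p hp
      by_cases h : p.1 < x0
      · exact hmin _ ⟨⟨p, hp, rfl⟩, h⟩
      · linarith
    obtain ⟨M', hM1, hM2⟩ := exists_big R x1
    obtain ⟨M, hM, hM'⟩ : ∃ M, x1 < M ∧ ∀ p ∈ R, p.1 < M := ⟨M', hM1, hM2⟩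
    have hxM : x0 < M := by obtain ⟨p, hp, rfl⟩ := hx; exact hM' p hp
    have hqx1 : q.1 < x1 := by
      have a1 := hb q hq; have a2 := hf q hq
      unfold Bet at a1; grind
    have hR' := diag_vmap hR q.1 M (fun p hp => (hM' p hp).ne)
    have s1 := cyc_right hR ⟨q, hq, rfl⟩ hl hM'
    have hx' : ∃ p ∈ R.image (vmap q.1 M), p.1 = x0 := col_vmap' hm0.ne' hx
    have hf' : ∀ p ∈ R.image (vmap q.1 M), p.1 ≠ x1 :=
      forall_vmap fun p hp => ⟨fun _ => hM.ne', fun _ => hf p hp⟩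
    have s2 : EE (R.image (vmap q.1 M)) ((R.image (vmap q.1 M)).image (vmap x0 x1)) := by
      apply ih hR' hx' hf'
      · apply forall_vmap
        intro p hp
        refine ⟨fun _ => ?_, fun _ => hb p hp⟩
        unfold Bet; grind
      · have : ((R.image (vmap q.1 M)).image Prod.fst).filter (· < x0) ⊆
            ((R.image Prod.fst).filter (· < x0)).erase q.1 := by
          intro z hz
          simp only [Finset.mem_filter, Finset.mem_image, Finset.mem_erase] at hz ⊢
          obtain ⟨⟨r, ⟨p, hp, rfl⟩, rfl⟩, hz⟩ := hz
          unfold vmap at *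
          split_ifs at * with h1
          · simp only at hz; linarith
          · exact ⟨h1, ⟨p, hp, rfl⟩, hz⟩
        have := Finset.card_le_card this
        rw [Finset.card_erase_of_mem (by
          simp only [Finset.mem_filter]; exact ⟨Finset.mem_image_of_mem _ hq, hm0⟩)] at this
        omega
    have hR'' := diag_vmap hR' x0 x1 hf'
    have s3 : EE ((R.image (vmap q.1 M)).image (vmap x0 x1))
        (((R.image (vmap q.1 M)).image (vmap x0 x1)).image (vmap M q.1)) := by
      apply cyc_left hR''
      · exact col_vmap' hxM.ne' (col_vmap _ ⟨q, hq, rfl⟩)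
      · apply forall_vmap
        apply forall_vmap
        intro p hp
        exact ⟨fun _ => ⟨fun _ => hM.le, fun _ => le_rfl⟩, fun _ => ⟨fun _ => hM.le, fun _ => (hM' p hp).le⟩⟩
      · apply forall_vmap
        apply forall_vmap
        intro p hp
        refine ⟨fun _ => ⟨fun _ => hqx1, fun _ => hM' q hq⟩, fun h => ⟨fun _ => hqx1, fun _ => ?_⟩⟩
        exact lt_of_le_of_ne (hl p hp) (Ne.symm h)
    refine ((s1.trans s2).trans s3).trans ?_
    rw [Finset.image_image, Finset.image_image]
    have : R.image ((vmap M q.1 ∘ vmap x0 x1) ∘ vmap q.1 M) = R.image (vmap x0 x1) := by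
      apply Finset.image_congr
      rintro ⟨a, b⟩ hp
      have h1 : a < M := hM' _ hp
      have h2 : a ≠ x1 := hf _ hp
      simp only [Function.comp, vmap]
      by_cases h3 : a = q.1
      · have := hm0.ne
        simp [h3, hxM.ne', hm0.ne]
      · by_cases h4 : a = x0
        · subst h4; simp [h3, hM.ne]
        · simp [h3, h4, h1.ne]
    rw [this]

theorem gap {R : Finset Pt} (hR : IsDiagram R) {x0 x1 : ℝ} (hx : ∃ p ∈ R, p.1 = x0)
    (hf : ∀ p ∈ R, p.1 ≠ x1) (hb : ∀ p ∈ R, ¬ Bet x0 x1 p.1) : EE R (R.image (vmap x0 x1)) :=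
  gap_v _ hR hx hf hb le_rfl

theorem gap_h {R : Finset Pt} (hR : IsDiagram R) {x0 x1 : ℝ} (hx : ∃ p ∈ R, p.2 = x0)
    (hf : ∀ p ∈ R, p.2 ≠ x1) (hb : ∀ p ∈ R, ¬ Bet x0 x1 p.2) : EE R (R.image (hmap x0 x1)) := by
  have := gap (R := T R) (diag_T hR) (x0 := x0) (x1 := x1)
    (by simpa only [exists_T, Prod.fst_swap])
    (by simpa only [forall_T, Prod.fst_swap]) (by simpa only [forall_T, Prod.fst_swap])
  have := EE_T this
  rwa [T_image, T_T, vmap_T] at this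

/-! sliding a column past compatible ones -/

def Compat (R : Finset Pt) (x0 c : ℝ) : Prop :=
  (∀ p ∈ R, ∀ q ∈ R, p.1 = x0 → q.1 = c → p.2 ≠ q.2) ∧ NoInterleaveV R x0 c

theorem compat_congr {R R' : Finset Pt} {x0 c x0' c' : ℝ}
    (h0 : ∀ z, (x0', z) ∈ R' → (x0, z) ∈ R) (h1 : ∀ z, (c', z) ∈ R' → (c, z) ∈ R)
    (h : Compat R x0 c) : Compat R' x0' c' := by
  constructor
  · rintro ⟨a, b⟩ hp ⟨a', b'⟩ hq e1 e2
    simp only at e1 e2; subst e1 e2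
    exact h.1 (x0, b) (h0 _ hp) (c, b') (h1 _ hq) rfl rfl
  · rintro ⟨a, b⟩ hp ⟨a', b'⟩ hp' ⟨d, e⟩ hq ⟨d', e'⟩ hq' e1 e2 e3 e4
    simp only at e1 e2 e3 e4; subst e1 e2 e3 e4
    exact h.2 (x0, b) (h0 _ hp) (x0, b') (h0 _ hp') (c, e) (h1 _ hq) (c, e') (h1 _ hq') rfl rfl rfl rfl

theorem forall_swapv {R : Finset Pt} {x0 x1 : ℝ} {P : Pt → Prop}
    (h : ∀ p ∈ R, (p.1 = x0 → P (x1, p.2)) ∧ (p.1 = x1 → P (x0, p.2)) ∧ (p.1 ≠ x0 → p.1 ≠ x1 → P p)) :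
    ∀ p ∈ R.image (swapv x0 x1), P p := by
  rw [Finset.forall_mem_image]
  intro p hp
  have := h p hp
  unfold swapv
  split_ifs with h1 h2
  · exact this.1 h1
  · exact this.2.1 h2
  · exact this.2.2 h1 h2

/-- Passing one column. -/
theorem pass {R : Finset Pt} (hR : IsDiagram R) {x0 c x1 : ℝ} (hx : ∃ p ∈ R, p.1 = x0)
    (hc : ∃ p ∈ R, p.1 = c) (hf : ∀ p ∈ R, p.1 ≠ x1) (hbt : Bet x0 x1 c)
    (h1 : ∀ p ∈ R, ¬ Bet x0 c p.1) (h2 : ∀ p ∈ R, ¬ Bet c x1 p.1) (hC : Compat R x0 c) :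
    EE R (R.image (vmap x0 x1)) := by
  have hne : x0 ≠ c := by unfold Bet at hbt; grind
  have hne1 : x1 ≠ c := by unfold Bet at hbt; grind
  have hne2 : x0 ≠ x1 := by unfold Bet at hbt; grind
  have hRa := diag_swapv hR x0 c
  have s1 : EE R (R.image (swapv x0 c)) := by
    refine .single (Or.inr ⟨hR, hRa, _, Or.inl ⟨x0, c, hne, hx, hc, ?_, hC.1, hC.2, rfl⟩, rfl⟩)
    intro p hp
    have := h1 p hp
    unfold Bet at this
    grind
  have hfa : ∀ p ∈ R.image (swapv x0 c), p.1 ≠ x1 :=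
    forall_swapv fun p hp => ⟨fun _ => hne1.symm, fun _ => hne2, fun _ _ => hf p hp⟩
  have s2 : EE (R.image (swapv x0 c)) ((R.image (swapv x0 c)).image (vmap c x1)) := by
    apply gap hRa
    · obtain ⟨⟨a, b⟩, hp, rfl⟩ := hx
      exact ⟨(c, b), (mem_swapv _ _).2 (Or.inr (Or.inl ⟨rfl, hp⟩)), rfl⟩
    · exact hfa
    · apply forall_swapv
      intro p hp
      refine ⟨fun _ => ?_, fun _ => ?_, fun _ _ => h2 p hp⟩
      · unfold Bet; simp only; grind
      · unfold Bet at *; simp only; clear * - hbt; grind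
  have hRb := diag_vmap hRa c x1 hfa
  have hfb : ∀ p ∈ (R.image (swapv x0 c)).image (vmap c x1), p.1 ≠ c :=
    forall_vmap fun p hp => ⟨fun _ => hne1, fun h => h⟩
  have s3 : EE ((R.image (swapv x0 c)).image (vmap c x1))
      (((R.image (swapv x0 c)).image (vmap c x1)).image (vmap x0 c)) := by
    apply gap hRb
    · apply col_vmap' hne
      obtain ⟨⟨a, b⟩, hp, rfl⟩ := hc
      exact ⟨(x0, b), (mem_swapv _ _).2 (Or.inl ⟨rfl, hp⟩), rfl⟩
    · exact hfb
    · apply forall_vmap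
      apply forall_swapv
      intro p hp
      have := h1 p hp
      unfold Bet at *
      refine ⟨fun _ => ⟨fun _ => ?_, fun _ => ?_⟩, fun _ => ⟨fun _ => ?_, fun _ => ?_⟩,
        fun _ _ => ⟨fun _ => ?_, fun _ => h1 p hp⟩⟩ <;> simp only <;> clear * - hbt <;> grind
  refine ((s1.trans s2).trans s3).trans ?_
  have : (((R.image (swapv x0 c)).image (vmap c x1)).image (vmap x0 c)) = R.image (vmap x0 x1) := by
    rw [Finset.image_image, Finset.image_image]
    apply Finset.image_congr
    rintro ⟨a, b⟩ hp
    simp only [Function.comp, vmap, swapv]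
    by_cases e1 : a = x0
    · simp [e1, hne2.symm]
    · by_cases e2 : a = c
      · simp [e2, hne, hne.symm]
      · simp [e1, e2]
  rw [this]

theorem slide_v (n : ℕ) : ∀ {R : Finset Pt} (_ : IsDiagram R) {x0 x1 : ℝ} (_ : ∃ p ∈ R, p.1 = x0)
    (_ : ∀ p ∈ R, p.1 ≠ x1) (_ : ∀ p ∈ R, Bet x0 x1 p.1 → Compat R x0 p.1)
    (_ : ((R.image Prod.fst).filter (Bet x0 x1)).card ≤ n), EE R (R.image (vmap x0 x1)) := by
  induction n with
  | zero =>
    intro R hR x0 x1 hx hf hb hn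
    apply gap hR hx hf
    intro p hp h
    have : p.1 ∈ ((R.image Prod.fst).filter (Bet x0 x1)) := by
      simp only [Finset.mem_filter]
      exact ⟨Finset.mem_image_of_mem _ hp, h⟩
    rw [Finset.card_eq_zero.1 (Nat.le_zero.1 hn)] at this
    simp at this
  | succ n ih =>
    intro R hR x0 x1 hx hf hb hn
    by_cases hn' : ((R.image Prod.fst).filter (Bet x0 x1)).card ≤ n
    · exact ih hR hx hf hb hn'
    have hne : ((R.image Prod.fst).filter (Bet x0 x1)).Nonempty := by
      rw [← Finset.card_pos]; omega
    obtain ⟨m, hm, hmin⟩ := Finset.exists_min_image _ (fun c => |c - x0|) hne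
    simp only [Finset.mem_filter, Finset.mem_image] at hm hmin
    obtain ⟨⟨q, hq, rfl⟩, hm0⟩ := hm
    have hq1 : ∀ p ∈ R, ¬ Bet x0 q.1 p.1 := by
      intro p hp h
      have hB : Bet x0 x1 p.1 := by unfold Bet at *; grind
      have := hmin p.1 ⟨⟨p, hp, rfl⟩, hB⟩
      unfold Bet at h
      rcases h with h | h
      · rw [abs_of_pos (by linarith), abs_of_pos (by linarith)] at this; linarith
      · rw [abs_of_neg (by linarith), abs_of_neg (by linarith)] at this; linarith
    obtain ⟨x', hx'⟩ := tiny (insert x1 (R.image Prod.fst)) q.1 x1 (hf q hq).symm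
    have hq2 : ∀ p ∈ R, ¬ Bet q.1 x' p.1 := by
      intro p hp
      have hp' : p.1 ∈ insert x1 (R.image Prod.fst) :=
        Finset.mem_insert_of_mem (Finset.mem_image_of_mem _ hp)
      unfold Bet
      rcases hx' with ⟨h1, h2, h3⟩ | ⟨h1, h2, h3⟩
      · have := h3 _ hp'; clear * - this h2; grind
      · have := h3 _ hp'; clear * - this h2; grind
    have hf' : ∀ p ∈ R, p.1 ≠ x' := by
      intro p hp
      have hp' : p.1 ∈ insert x1 (R.image Prod.fst) :=
        Finset.mem_insert_of_mem (Finset.mem_image_of_mem _ hp)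
      rcases hx' with ⟨h1, h2, h3⟩ | ⟨h1, h2, h3⟩
      · have := h3 _ hp'; clear * - this h2; grind
      · have := h3 _ hp'; clear * - this h2; grind
    have hbx' : Bet q.1 x1 x' := by
      unfold Bet
      rcases hx' with ⟨h1, h2, h3⟩ | ⟨h1, h2, h3⟩
      · have := h3 x1 (by simp); clear * - this h2 h1; grind
      · have := h3 x1 (by simp); clear * - this h2 h1; grind
    have hbq : Bet x0 x' q.1 := by
      unfold Bet at *; clear * - hm0 hbx'; grind
    have s1 := pass hR hx ⟨q, hq, rfl⟩ hf' hbq hq1 hq2 (hb q hq hm0)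
    have hR' := diag_vmap hR x0 x' hf'
    have hxx' : x0 ≠ x' := by unfold Bet at hbq; clear * - hbq; grind
    have s2 : EE (R.image (vmap x0 x')) ((R.image (vmap x0 x')).image (vmap x' x1)) := by
      apply ih hR' (col_vmap _ hx)
      · refine forall_vmap fun p hp => ⟨fun _ => ?_, fun _ => hf p hp⟩
        unfold Bet at hbx'; simp only; clear * - hbx'; grind
      · apply forall_vmap
        intro p hp
        refine ⟨fun _ h => ?_, fun h h' => ?_⟩
        · exfalso; unfold Bet at h; simp only at h; clear * - h; grind
        · refine compat_congr ?_ ?_ (hb p hp ?_)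
          · intro z hz
            rw [mem_vmap hf'] at hz
            rcases hz with ⟨_, h⟩ | ⟨_, h⟩
            · exact h
            · exact absurd rfl (hf' _ h)
          · intro z hz
            rw [mem_vmap hf'] at hz
            rcases hz with ⟨e, _⟩ | ⟨_, h⟩
            · exact absurd e (hf' _ hp)
            · exact h
          · unfold Bet at *; clear * - h' hbx' hbq hm0; grind
      · have : ((R.image (vmap x0 x')).image Prod.fst).filter (Bet x' x1) ⊆
            ((R.image Prod.fst).filter (Bet x0 x1)).erase q.1 := by
          intro z hz
          simp only [Finset.mem_filter, Finset.mem_image, Finset.mem_erase] at hz ⊢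
          obtain ⟨⟨r, ⟨p, hp, rfl⟩, rfl⟩, hz⟩ := hz
          unfold vmap at *
          split_ifs at * with h1
          · exfalso; unfold Bet at hz; simp only at hz; clear * - hz; grind
          · refine ⟨?_, ⟨p, hp, rfl⟩, ?_⟩
            · unfold Bet at *; clear * - hz hbx' hbq hm0; grind
            · unfold Bet at *; clear * - hz hbx' hbq hm0; grind
        have := Finset.card_le_card this
        rw [Finset.card_erase_of_mem (by
          simp only [Finset.mem_filter]; exact ⟨Finset.mem_image_of_mem _ hq, hm0⟩)] at this
        omega
    refine (s1.trans s2).trans ?_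
    rw [vmap_vmap hf']

theorem slide {R : Finset Pt} (hR : IsDiagram R) {x0 x1 : ℝ} (hx : ∃ p ∈ R, p.1 = x0)
    (hf : ∀ p ∈ R, p.1 ≠ x1) (hb : ∀ p ∈ R, Bet x0 x1 p.1 → Compat R x0 p.1) :
    EE R (R.image (vmap x0 x1)) :=
  slide_v _ hR hx hf hb le_rfl

/-! short columns -/

def Short (R : Finset Pt) (x0 b b' : ℝ) : Prop :=
  (∀ z, (x0, z) ∈ R → z = b ∨ z = b') ∧ ∀ p ∈ R, ¬ Bet b b' p.2

theorem short_vmap {R : Finset Pt} {x0 b b' x1 : ℝ} (h : Short R x0 b b') (hf : ∀ p ∈ R, p.1 ≠ x1) :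
    Short (R.image (vmap x0 x1)) x1 b b' := by
  constructor
  · intro z hz
    rw [mem_vmap hf] at hz
    rcases hz with ⟨_, h1⟩ | ⟨_, h1⟩
    · exact h.1 _ h1
    · exact absurd rfl (hf _ h1)
  · apply forall_vmap
    intro p hp
    exact ⟨fun _ => h.2 p hp, fun _ => h.2 p hp⟩

theorem short_slide {R : Finset Pt} (hR : IsDiagram R) {x0 x1 b b' : ℝ} (hx : ∃ p ∈ R, p.1 = x0)
    (hf : ∀ p ∈ R, p.1 ≠ x1) (hs : Short R x0 b b')
    (hb : ∀ p ∈ R, (p.2 = b ∨ p.2 = b') → p.1 = x0 ∨ ¬ Bet x0 x1 p.1) :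
    EE R (R.image (vmap x0 x1)) := by
  apply slide hR hx hf
  intro p hp hB
  have hpx : p.1 ≠ x0 := by rintro e; rw [e] at hB; unfold Bet at hB; clear * - hB; grind
  have hnb : ∀ z, (p.1, z) ∈ R → z ≠ b ∧ z ≠ b' := by
    intro z hz
    constructor
    · rintro rfl
      rcases hb _ hz (Or.inl rfl) with h | h
      · exact hpx h
      · exact h hB
    · rintro rfl
      rcases hb _ hz (Or.inr rfl) with h | h
      · exact hpx h
      · exact h hB
  constructor
  · rintro ⟨a, c⟩ h1 ⟨a', c'⟩ h2 e1 e2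
    simp only at e1 e2; subst e1 e2
    have h3 := hs.1 _ h1; have h4 := hnb _ h2
    simp only; clear * - h3 h4; grind
  · rintro ⟨a, c⟩ hp1 ⟨a', c'⟩ hp1' ⟨d, e⟩ hq ⟨d', e'⟩ hq' e1 e2 e3 e4
    simp only at e1 e2 e3 e4; subst e1 e2 e3 e4
    have a1 := hs.1 _ hp1; have a2 := hs.1 _ hp1'
    have a3 := hs.2 _ hq; have a4 := hs.2 _ hq'
    unfold Bet at a3 a4
    simp only at *; clear * - a1 a2 a3 a4; grind

theorem short_arc {R : Finset Pt} (hR : IsDiagram R) {x0 x1 b b' : ℝ} (hx : ∃ p ∈ R, p.1 = x0)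
    (hf : ∀ p ∈ R, p.1 ≠ x1) (hs : Short R x0 b b')
    (hb : (∀ p ∈ R, (p.2 = b ∨ p.2 = b') → p.1 = x0 ∨ ¬ Bet x0 x1 p.1) ∨
      (∀ p ∈ R, (p.2 = b ∨ p.2 = b') → p.1 = x0 ∨ Bet x0 x1 p.1)) :
    EE R (R.image (vmap x0 x1)) := by
  rcases hb with hb | hb
  · exact short_slide hR hx hf hs hb
  obtain ⟨M, hM, hM'⟩ := exists_big R x1
  obtain ⟨L, hL, hL'⟩ := exists_small R x1
  have hx0M : x0 < M := by obtain ⟨p, hp, rfl⟩ := hx; exact hM' p hp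
  have hx0L : L < x0 := by obtain ⟨p, hp, rfl⟩ := hx; exact hL' p hp
  have hfL : ∀ p ∈ R, p.1 ≠ L := fun p hp => (hL' p hp).ne'
  have hfM : ∀ p ∈ R, p.1 ≠ M := fun p hp => (hM' p hp).ne
  have hRL := diag_vmap hR x0 L hfL
  have hRM := diag_vmap hR x0 M hfM
  have hx0x1 : x0 ≠ x1 := by obtain ⟨p, hp, rfl⟩ := hx; exact hf p hp
  have lM : EE (R.image (vmap x0 L)) (R.image (vmap x0 M)) := by
    rw [← vmap_vmap (x0 := x0) (x1 := M) hfL]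
    apply cyc_right hRL (col_vmap _ hx)
    · exact forall_vmap fun p hp => ⟨fun _ => le_rfl, fun _ => (hL' p hp).le⟩
    · exact forall_vmap fun p hp => ⟨fun _ => by simp only; linarith, fun _ => hM' p hp⟩
  rcases lt_or_gt_of_ne hx0x1 with hlt | hlt
  · have s1 : EE R (R.image (vmap x0 L)) := by
      apply short_slide hR hx hfL hs
      intro p hp h
      have := hb p hp h; have := hL' p hp
      unfold Bet at *; grind
    have s3 : EE (R.image (vmap x0 M)) (R.image (vmap x0 x1)) := by
      rw [← vmap_vmap (x0 := x0) (x1 := x1) hfM]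
      apply short_slide hRM (col_vmap _ hx) _ (short_vmap hs hfM)
      · apply forall_vmap
        intro p hp
        refine ⟨fun _ _ => Or.inl rfl, fun h h' => ?_⟩
        have := hb p hp h'; have := hM' p hp
        right; unfold Bet at *; grind
      · exact forall_vmap fun p hp => ⟨fun _ => hM.ne', fun _ => hf p hp⟩
    exact (s1.trans lM).trans s3
  · have s1 : EE R (R.image (vmap x0 M)) := by
      apply short_slide hR hx hfM hs
      intro p hp h
      have := hb p hp h; have := hM' p hp
      unfold Bet at *; grind
    have s3 : EE (R.image (vmap x0 L)) (R.image (vmap x0 x1)) := by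
      rw [← vmap_vmap (x0 := x0) (x1 := x1) hfL]
      apply short_slide hRL (col_vmap _ hx) _ (short_vmap hs hfL)
      · apply forall_vmap
        intro p hp
        refine ⟨fun _ _ => Or.inl rfl, fun h h' => ?_⟩
        have := hb p hp h'; have := hL' p hp
        right; unfold Bet at *; grind
      · exact forall_vmap fun p hp => ⟨fun _ => hL.ne, fun _ => hf p hp⟩
    exact (s1.trans (EE_symm lM)).trans s3

/-! stabilizations -/

structure SV (R : Finset Pt) (x y x' y' : ℝ) : Prop where
  mem : (x, y) ∈ R
  nx : x ≠ x'
  ny : y ≠ y'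
  fx : ∀ p q, (p, q) ∈ R → p ≠ x'
  fy : ∀ p q, (p, q) ∈ R → q ≠ y'
  gx : ∀ p q, (p, q) ∈ R → ¬ Bet x x' p
  gy : ∀ p q, (p, q) ∈ R → ¬ Bet y y' q

def Same (x x' x'' : ℝ) : Prop := (x < x' ∧ x < x'') ∨ (x' < x ∧ x'' < x)

theorem mem_stab (x y x' y' : ℝ) (R : Finset Pt) (p q : ℝ) : (p, q) ∈ stabSet x y x' y' R ↔
    (p = x' ∧ q = y) ∨ (p = x ∧ q = y') ∨ (p = x' ∧ q = y') ∨ (¬ (p = x ∧ q = y) ∧ (p, q) ∈ R) := by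
  simp only [stabSet, Finset.mem_insert, Finset.mem_erase, Prod.mk.injEq, ne_eq]

theorem bet_iff (a b c : ℝ) : (min a b < c ∧ c < max a b) ↔ Bet a b c := by
  unfold Bet
  simp only [min_lt_iff, lt_max_iff]
  grind

theorem SV_T {R : Finset Pt} {x y x' y' : ℝ} (h : SV R x y x' y') : SV (T R) y x y' x' := by
  constructor
  · rw [mem_T]; exact h.mem
  · exact h.ny
  · exact h.nx
  · intro p q hp; rw [mem_T] at hp; exact h.fy _ _ hp
  · intro p q hp; rw [mem_T] at hp; exact h.fx _ _ hp
  · intro p q hp; rw [mem_T] at hp; exact h.gy _ _ hp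
  · intro p q hp; rw [mem_T] at hp; exact h.gx _ _ hp

theorem diag_stab_half {R : Finset Pt} (hR : IsDiagram R) {x y x' y' : ℝ} (h : SV R x y x' y')
    (a b : ℝ) (hab : (a, b) ∈ stabSet x y x' y' R) :
    ∃ z, z ≠ b ∧ ∀ w, (a, w) ∈ stabSet x y x' y' R ↔ w = b ∨ w = z := by
  have nx := h.nx; have ny := h.ny
  simp only [mem_stab] at *
  obtain ⟨⟨w, hw, hw'⟩, -⟩ := (isDiag_iff R).1 hR _ _ h.mem
  have hwR : (x, w) ∈ R := (hw' w).2 (Or.inr rfl)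
  have hwy := h.fy _ _ hwR
  have hyy := h.fy _ _ h.mem
  by_cases e1 : a = x
  · subst e1
    by_cases e2 : b = y'
    · refine ⟨w, by grind, ?_⟩
      intro z; have := hw' z; clear hab; grind
    · refine ⟨y', by grind, ?_⟩
      intro z; have := hw' z; have := hw' b; grind
  · by_cases e2 : a = x'
    · have fx := h.fx a
      by_cases e3 : b = y
      · exact ⟨y', by grind, by grind⟩
      · exact ⟨y, by grind, by grind⟩
    · have : (a, b) ∈ R := by grind
      obtain ⟨⟨z, hz, hz'⟩, -⟩ := (isDiag_iff R).1 hR _ _ this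
      refine ⟨z, hz, ?_⟩
      intro w; rw [← hz' w]; clear * - e1 e2; grind

theorem diag_stab {R : Finset Pt} (hR : IsDiagram R) {x y x' y' : ℝ} (h : SV R x y x' y') :
    IsDiagram (stabSet x y x' y' R) := by
  rw [isDiag_iff]
  intro a b hab
  refine ⟨diag_stab_half hR h a b hab, ?_⟩
  have := diag_stab_half (diag_T hR) (SV_T h) b a (by rwa [← stabSet_T, mem_T])
  simpa only [← stabSet_T, mem_T] using this

theorem stab_iff (t : StabType) (R R' : Finset Pt) : StabMove t R R' ↔ IsDiagram R ∧
    ∃ x y x' y', SV R x y x' y' ∧ (t = StabType.I ↔ (x < x' ↔ y < y')) ∧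
      R' = stabSet x y x' y' R := by
  have sg : ∀ x y x' y' : ℝ, x ≠ x' → y ≠ y' → (0 < (x - x') * (y - y') ↔ (x < x' ↔ y < y')) := by
    intro x y x' y' h1 h2
    rw [mul_pos_iff]
    simp only [sub_pos, sub_neg]
    grind
  constructor
  · rintro ⟨⟨x, y⟩, hR, hR', x', y', ⟨h1, h2, h3, h4, h5, h6, h7, h8⟩, ht⟩
    refine ⟨hR, x, y, x', y', ⟨h1, h2, h3, fun p q h => h4 _ h, fun p q h => h5 _ h, ?_, ?_⟩, ?_, h8⟩
    · intro p q h; rw [← bet_iff]; exact h6 _ h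
    · intro p q h; rw [← bet_iff]; exact h7 _ h
    · rw [ht]; exact sg _ _ _ _ h2 h3
  · rintro ⟨hR, x, y, x', y', h, ht, rfl⟩
    refine ⟨(x, y), hR, diag_stab hR h, x', y', ⟨h.mem, h.nx, h.ny, fun p hp => h.fx p.1 p.2 hp,
      fun p hp => h.fy p.1 p.2 hp, ?_, ?_, rfl⟩, ?_⟩
    · intro p hp; rw [bet_iff]; exact h.gx p.1 p.2 hp
    · intro p hp; rw [bet_iff]; exact h.gy p.1 p.2 hp
    · rw [ht]; exact (sg _ _ _ _ h.nx h.ny).symm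

theorem tiny' (F : Finset ℝ) (x z : ℝ) (h : z ≠ x) :
    ∃ x', Same x z x' ∧ ∀ r ∈ F, r ≠ x' ∧ ¬ Bet x x' r := by
  obtain ⟨x', h⟩ := tiny F x z h
  refine ⟨x', ?_, ?_⟩
  · unfold Same; tauto
  · intro r hr
    unfold Bet
    rcases h with ⟨h1, h2, h3⟩ | ⟨h1, h2, h3⟩
    · have := h3 r hr; clear * - this h2; grind
    · have := h3 r hr; clear * - this h2; grind

theorem indep_v {R : Finset Pt} (hR : IsDiagram R) {x y x' y' x'' : ℝ} (h : SV R x y x' y')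
    (h' : SV R x y x'' y') (hs : Same x x' x'') :
    EE (stabSet x y x' y' R) (stabSet x y x'' y' R) := by
  by_cases e : x' = x''
  · rw [e]
  have hf : ∀ p ∈ stabSet x y x' y' R, p.1 ≠ x'' := by
    rintro ⟨p, q⟩ hp
    rw [mem_stab] at hp
    have := h'.nx; have := h'.fx p q
    grind
  have : stabSet x y x'' y' R = (stabSet x y x' y' R).image (vmap x' x'') := by
    ext ⟨p, q⟩
    rw [mem_vmap hf]
    simp only [mem_stab]
    have := h.nx; have := h.fx p q; have := h'.fx p q; have := h'.nx; have := h.fx x' q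
    clear hf hs
    grind
  rw [this]
  apply gap (diag_stab hR h) ⟨(x', y), by simp [mem_stab], rfl⟩ hf
  rintro ⟨p, q⟩ hp
  rw [mem_stab] at hp
  have a1 := h.gx p q; have a2 := h'.gx p q
  have a3 := h.fx p q; have a4 := h'.fx p q
  unfold Bet Same at *
  simp only
  rcases hp with ⟨rfl, rfl⟩ | ⟨rfl, rfl⟩ | ⟨rfl, rfl⟩ | ⟨_, hp⟩
  · clear * -; grind
  · clear * - hs; grind
  · clear * -; grind
  · have a1 := a1 hp; have a2 := a2 hp; have a3 := a3 hp; have a4 := a4 hp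
    clear * - hs a1 a2 a3 a4; grind

theorem indep {R : Finset Pt} (hR : IsDiagram R) {x y x' y' x'' y'' : ℝ} (h : SV R x y x' y')
    (h' : SV R x y x'' y'') (hs : Same x x' x'') (hs' : Same y y' y'') :
    EE (stabSet x y x' y' R) (stabSet x y x'' y'' R) := by
  have hm : SV R x y x'' y' := ⟨h.mem, h'.nx, h.ny, h'.fx, h.fy, h'.gx, h.gy⟩
  refine (indep_v hR h hm hs).trans ?_
  have := EE_T (indep_v (diag_T hR) (SV_T hm) (SV_T h') hs')
  rwa [stabSet_T, stabSet_T, T_T] at this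

theorem near {R R1 : Finset Pt} (hR1 : IsDiagram R1) {x y x' y' : ℝ} (hxy : (x, y) ∈ R)
    (h : SV R1 x y x' y') (E E' : Finset ℝ) :
    ∃ x'' y'', SV R x y x'' y'' ∧ SV R1 x y x'' y'' ∧ Same x x' x'' ∧ Same y y' y'' ∧
      (∀ r ∈ E, r ≠ x'' ∧ ¬ Bet x x'' r) ∧ (∀ r ∈ E', r ≠ y'' ∧ ¬ Bet y y'' r) ∧
      EE (stabSet x y x' y' R1) (stabSet x y x'' y'' R1) := by
  obtain ⟨x'', sx, hx⟩ := tiny' (E ∪ R.image Prod.fst ∪ R1.image Prod.fst) x x' h.nx.symm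
  obtain ⟨y'', sy, hy⟩ := tiny' (E' ∪ R.image Prod.snd ∪ R1.image Prod.snd) y y' h.ny.symm
  have nx : x ≠ x'' := by unfold Same at sx; clear * - sx; grind
  have ny : y ≠ y'' := by unfold Same at sy; clear * - sy; grind
  have mx : ∀ p q, (p, q) ∈ R → p ∈ E ∪ R.image Prod.fst ∪ R1.image Prod.fst := by
    intro p q h
    exact Finset.mem_union_left _ (Finset.mem_union_right _ (Finset.mem_image_of_mem Prod.fst h))
  have mx1 : ∀ p q, (p, q) ∈ R1 → p ∈ E ∪ R.image Prod.fst ∪ R1.image Prod.fst := by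
    intro p q h
    exact Finset.mem_union_right _ (Finset.mem_image_of_mem Prod.fst h)
  have my : ∀ p q, (p, q) ∈ R → q ∈ E' ∪ R.image Prod.snd ∪ R1.image Prod.snd := by
    intro p q h
    exact Finset.mem_union_left _ (Finset.mem_union_right _ (Finset.mem_image_of_mem Prod.snd h))
  have my1 : ∀ p q, (p, q) ∈ R1 → q ∈ E' ∪ R.image Prod.snd ∪ R1.image Prod.snd := by
    intro p q h
    exact Finset.mem_union_right _ (Finset.mem_image_of_mem Prod.snd h)
  have s1 : SV R1 x y x'' y'' := ⟨h.mem, nx, ny, fun p q h => (hx p (mx1 p q h)).1,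
    fun p q h => (hy q (my1 p q h)).1, fun p q h => (hx p (mx1 p q h)).2,
    fun p q h => (hy q (my1 p q h)).2⟩
  refine ⟨x'', y'', ⟨hxy, nx, ny, fun p q h => (hx p (mx p q h)).1,
    fun p q h => (hy q (my p q h)).1, fun p q h => (hx p (mx p q h)).2,
    fun p q h => (hy q (my p q h)).2⟩, s1, sx, sy, ?_, ?_, indep hR1 h s1 sx sy⟩
  · intro r hr; exact hx r (Finset.mem_union_left _ (Finset.mem_union_left _ hr))
  · intro r hr; exact hy r (Finset.mem_union_left _ (Finset.mem_union_left _ hr))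

theorem mem_hmap {R : Finset Pt} {x0 x1 : ℝ} (hf : ∀ p ∈ R, p.2 ≠ x1) (a b : ℝ) :
    (a, b) ∈ R.image (hmap x0 x1) ↔ (b = x1 ∧ (a, x0) ∈ R) ∨ (b ≠ x0 ∧ (a, b) ∈ R) := by
  have := mem_vmap (R := T R) (x0 := x0) (x1 := x1) (by simpa only [forall_T, Prod.fst_swap]) b a
  rw [← hmap_T, ← T_image, mem_T, mem_T, mem_T] at this
  exact this

theorem diag_hmap {R : Finset Pt} (hR : IsDiagram R) (x0 x1 : ℝ) (hf : ∀ p ∈ R, p.2 ≠ x1) :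
    IsDiagram (R.image (hmap x0 x1)) := by
  have := diag_T (diag_vmap (diag_T hR) x0 x1 (by simpa only [forall_T, Prod.fst_swap]))
  rwa [T_image, T_T, vmap_T] at this

theorem flex_row {R : Finset Pt} (hR : IsDiagram R) {a b a' b' c : ℝ} (h : SV R a b a' b')
    (hc : (c, b) ∈ R) (hca : c ≠ a) : ∃ c'' b'', SV R c b c'' b'' ∧ (c < c'' ↔ a' < a) ∧
      (b < b'' ↔ b' < b) ∧ EE (stabSet a b a' b' R) (stabSet c b c'' b'' R) := by
  have nx := h.nx; have ny := h.ny
  obtain ⟨c'', sc, hc''⟩ := tiny' (insert a' (R.image Prod.fst)) c (c + (a - a'))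
    (by intro h; apply nx; linarith)
  obtain ⟨b'', sb, hb''⟩ := tiny' (insert b' (R.image Prod.snd)) b (b + (b - b'))
    (by intro h; apply ny; linarith)
  have sc' : (a' < a ∧ c < c'') ∨ (a < a' ∧ c'' < c) := by
    unfold Same at sc
    rcases sc with ⟨h1, h2⟩ | ⟨h1, h2⟩
    · left; exact ⟨by linarith, h2⟩
    · right; exact ⟨by linarith, h2⟩
  have sb' : (b' < b ∧ b < b'') ∨ (b < b' ∧ b'' < b) := by
    unfold Same at sb
    rcases sb with ⟨h1, h2⟩ | ⟨h1, h2⟩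
    · left; exact ⟨by linarith, h2⟩
    · right; exact ⟨by linarith, h2⟩
  clear sc sb
  have cx : ∀ p q, (p, q) ∈ R → p ≠ c'' ∧ ¬ Bet c c'' p := fun p q hp =>
    hc'' p (Finset.mem_insert_of_mem (Finset.mem_image_of_mem Prod.fst hp))
  have cy : ∀ p q, (p, q) ∈ R → q ≠ b'' ∧ ¬ Bet b b'' q := fun p q hp =>
    hb'' q (Finset.mem_insert_of_mem (Finset.mem_image_of_mem Prod.snd hp))
  have cx' := hc'' a' (by simp)
  have cy' := hb'' b' (by simp)
  clear hc'' hb''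
  have ncc : c ≠ c'' := (cx _ _ hc).1
  have nbb : b ≠ b'' := (cy _ _ hc).1
  have row : ∀ z, (z, b) ∈ R → z = a ∨ z = c := by
    intro z hz
    obtain ⟨-, w, hw, hw'⟩ := (isDiag_iff R).1 hR _ _ h.mem
    have h1 := (hw' _).1 hc
    have h2 := (hw' _).1 hz
    clear * - h1 h2 hca; grind
  have hSV : SV R c b c'' b'' := ⟨hc, ncc, nbb, fun p q h => (cx p q h).1, fun p q h => (cy p q h).1,
    fun p q h => (cx p q h).2, fun p q h => (cy p q h).2⟩
  refine ⟨c'', b'', hSV, by clear * - sc'; grind, by clear * - sb'; grind, ?_⟩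
  have hD := diag_stab hR h
  have f1 : ∀ p ∈ stabSet a b a' b' R, p.1 ≠ c'' := by
    rintro ⟨p, q⟩ hp
    rw [mem_stab] at hp
    rcases hp with ⟨rfl, rfl⟩ | ⟨rfl, rfl⟩ | ⟨rfl, rfl⟩ | ⟨_, hp⟩
    · exact cx'.1
    · exact (cx _ _ h.mem).1
    · exact cx'.1
    · exact (cx _ _ hp).1
  have s1 : EE (stabSet a b a' b' R) ((stabSet a b a' b' R).image (vmap a' c'')) := by
    refine short_arc (b := b) (b' := b') hD ⟨(a', b), by simp [mem_stab], rfl⟩ f1 ⟨?_, ?_⟩ ?_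
    · intro z hz
      rw [mem_stab] at hz
      have := h.fx a' z
      clear * - hz this nx; grind
    · rintro ⟨p, q⟩ hp
      rw [mem_stab] at hp
      have := h.gy p q
      unfold Bet at *; simp only
      clear * - hp this; grind
    · have key : ∀ p ∈ stabSet a b a' b' R, (p.2 = b ∨ p.2 = b') → p.1 = a' ∨ p.1 = a ∨ p.1 = c := by
        rintro ⟨p, q⟩ hp hq
        rw [mem_stab] at hp
        simp only at *
        have h1 := h.fy p q; have h2 := row p
        clear * - hp hq h1 h2; grind
      have g1 := h.gx _ _ hc
      have g2 := (cx _ _ h.mem).1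
      have g3 := (cx _ _ h.mem).2
      have g4 := cx'.1
      have g5 := cx'.2
      have g6 := h.fx _ _ hc
      have : (¬ Bet a' c'' a ∧ ¬ Bet a' c'' c) ∨ (Bet a' c'' a ∧ Bet a' c'' c) := by
        unfold Bet at *
        clear * - g1 g2 g3 g4 g5 g6 hca sc'
        grind
      rcases this with ⟨h1, h2⟩ | ⟨h1, h2⟩
      · left
        intro p hp hq
        rcases key p hp hq with e | e | e
        · exact Or.inl e
        · right; rw [e]; exact h1
        · right; rw [e]; exact h2
      · right
        intro p hp hq
        rcases key p hp hq with e | e | e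
        · exact Or.inl e
        · right; rw [e]; exact h1
        · right; rw [e]; exact h2
  have hD1 := diag_vmap hD a' c'' f1
  set Q1 := (stabSet a b a' b' R).image (vmap a' c'') with hQ1
  have m1 : ∀ p q, (p, q) ∈ Q1 ↔ (p = c'' ∧ q = b) ∨ (p = a ∧ q = b') ∨ (p = c'' ∧ q = b') ∨
      (¬ (p = a ∧ q = b) ∧ (p, q) ∈ R) := by
    intro p q
    rw [hQ1, mem_vmap f1]
    simp only [mem_stab]
    have h1 := h.fx p q; have h2 := h.fx a' q
    clear * - h1 h2 nx; grind
  clear_value Q1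
  have f2 : ∀ p ∈ Q1, p.2 ≠ b'' := by
    rintro ⟨p, q⟩ hp
    rw [m1] at hp
    have h1 := cy p q; have h2 := cy'.1
    simp only; clear * - hp h1 h2 nbb; grind
  have s2 : EE Q1 (Q1.image (hmap b b'')) := by
    refine gap_h hD1 ⟨(c'', b), (m1 _ _).2 (by simp), rfl⟩ f2 ?_
    rintro ⟨p, q⟩ hp
    rw [m1] at hp
    have h1 := cy p q; have h2 := cy'.2
    have h3 : ¬ Bet b b'' b := by unfold Bet; clear * -; grind
    simp only; clear * - hp h1 h2 h3; grind
  have hD2 := diag_hmap hD1 b b'' f2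
  set Q2 := Q1.image (hmap b b'') with hQ2
  have m2 : ∀ p q, (p, q) ∈ Q2 ↔ (p = c'' ∧ q = b'') ∨ (p = a ∧ q = b') ∨ (p = c'' ∧ q = b') ∨
      (p = c ∧ q = b'') ∨ (q ≠ b ∧ (p, q) ∈ R) := by
    intro p q
    rw [hQ2, mem_hmap f2]
    simp only [m1]
    have h1 := row p
    clear * - h1 ny nbb hca hc; grind
  clear_value Q2
  have f3 : ∀ p ∈ Q2, p.2 ≠ b := by
    rintro ⟨p, q⟩ hp
    rw [m2] at hp
    simp only; clear * - hp nbb ny; grind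
  have s3 : EE Q2 (Q2.image (hmap b' b)) := by
    refine gap_h hD2 ⟨(a, b'), (m2 _ _).2 (by simp), rfl⟩ f3 ?_
    rintro ⟨p, q⟩ hp
    rw [m2] at hp
    have h1 := h.gy p q
    unfold Bet at *
    simp only; clear * - hp h1 sb'; grind
  refine ((s1.trans s2).trans s3).trans ?_
  have : Q2.image (hmap b' b) = stabSet c b c'' b'' R := by
    ext ⟨p, q⟩
    rw [mem_hmap f3, mem_stab]
    simp only [m2]
    have h1 := row p; have h2 := h.fy p q; have h3 := h.mem; have h4 := cy'.1
    have h5 := h.fy p b'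
    clear * - h1 h2 h3 h4 h5 hca hc ny nbb; grind
  rw [this]

theorem flex_col {R : Finset Pt} (hR : IsDiagram R) {a b a' b' c : ℝ} (h : SV R a b a' b')
    (hc : (a, c) ∈ R) (hca : c ≠ b) : ∃ a'' c'', SV R a c a'' c'' ∧ (c < c'' ↔ b' < b) ∧
      (a < a'' ↔ a' < a) ∧ EE (stabSet a b a' b' R) (stabSet a c a'' c'' R) := by
  obtain ⟨c'', a'', h1, h2, h3, h4⟩ := flex_row (diag_T hR) (SV_T h) ((mem_T _ _ _).2 hc) hca
  refine ⟨a'', c'', ?_, h2, h3, ?_⟩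
  · have := SV_T h1; rwa [T_T] at this
  · have := EE_T h4; rwa [stabSet_T, stabSet_T, T_T] at this

/-! pushing exchange moves through stabilizations -/

theorem stab_T {t : StabType} {R R' : Finset Pt} (h : StabMove t R R') : StabMove t (T R) (T R') := by
  rw [stab_iff] at h ⊢
  obtain ⟨hR, x, y, x', y', hv, ht, rfl⟩ := h
  exact ⟨diag_T hR, y, x, y', x', SV_T hv, by rw [ht]; tauto, stabSet_T _ _ _ _ _⟩

theorem same_lt {x x' x'' : ℝ} (h : Same x x' x'') : (x < x'' ↔ x < x') := by
  unfold Same at h; grind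

theorem push_core {R R1 : Finset Pt} (hR : IsDiagram R) (hR1 : IsDiagram R1) (E : Finset ℝ)
    (hm : ∀ x y, (x, y) ∈ R1 → x ∉ E → (x, y) ∈ R)
    (hE : ∀ x y, (x, y) ∈ R1 → x ∈ E → ∃ c, c ∉ E ∧ (c, y) ∈ R1)
    (hK : ∀ x y x' y', x ∉ E → SV R x y x' y' → SV R1 x y x' y' →
      (∀ r ∈ E, r ≠ x' ∧ ¬ Bet x x' r) → EE (stabSet x y x' y' R) (stabSet x y x' y' R1))
    {t : StabType} {R2 : Finset Pt} (h : StabMove t R1 R2) :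
    ∃ R', StabMove t R R' ∧ EE R' R2 := by
  rw [stab_iff] at h
  obtain ⟨-, x, y, x', y', hv, ht, rfl⟩ := h
  have key : ∀ x y x' y', x ∉ E → SV R1 x y x' y' → (t = StabType.I ↔ (x < x' ↔ y < y')) →
      ∃ R', StabMove t R R' ∧ EE R' (stabSet x y x' y' R1) := by
    intro x y x' y' hx hv ht
    obtain ⟨x'', y'', h1, h2, h3, h4, h5, -, h6⟩ := near hR1 (hm x y hv.mem hx) hv E ∅
    refine ⟨stabSet x y x'' y'' R, ?_, (hK x y x'' y'' hx h1 h2 h5).trans (EE_symm h6)⟩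
    rw [stab_iff]
    exact ⟨hR, x, y, x'', y'', h1, by rw [ht, same_lt h3, same_lt h4], rfl⟩
  by_cases hx : x ∈ E
  · obtain ⟨c, hc, hcy⟩ := hE x y hv.mem hx
    obtain ⟨c', y'', h1, h2, h3, h4⟩ := flex_row hR1 hv hcy (by rintro rfl; exact hc hx)
    obtain ⟨R', h5, h6⟩ := key c y c' y'' hc h1 (by
      rw [ht, h2, h3]; have := hv.nx; have := hv.ny; clear * - this hv
      have h1 := hv.nx; have h2 := hv.ny
      have : (x' < x) ↔ ¬ (x < x') := by clear * - h1; grind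
      have : (y' < y) ↔ ¬ (y < y') := by clear * - h2; grind
      tauto)
    exact ⟨R', h5, h6.trans (EE_symm h4)⟩
  · exact key x y x' y' hx hv ht

theorem push_cyc_v {R R1 : Finset Pt} (hR : IsDiagram R) (hR1 : IsDiagram R1) (x0 x1 : ℝ)
    (hx : ∃ p ∈ R, p.1 = x0)
    (h : ((∀ p ∈ R, x0 ≤ p.1) ∧ ∀ p ∈ R, p.1 ≠ x0 → p.1 < x1) ∨
      ((∀ p ∈ R, p.1 ≤ x0) ∧ ∀ p ∈ R, p.1 ≠ x0 → x1 < p.1))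
    (he : R1 = R.image (vmap x0 x1))
    {t : StabType} {R2 : Finset Pt} (hs : StabMove t R1 R2) :
    ∃ R', StabMove t R R' ∧ EE R' R2 := by
  obtain ⟨q, hq, hq0⟩ := exists_other_col hR hx
  have hf : ∀ p ∈ R, p.1 ≠ x1 := by
    intro p hp
    rcases h with ⟨ha, hb⟩ | ⟨ha, hb⟩
    · have := ha q hq; have := hb q hq hq0; have := hb p hp; grind
    · have := ha q hq; have := hb q hq hq0; have := hb p hp; grind
  have hne : x0 ≠ x1 := by obtain ⟨p, hp, rfl⟩ := hx; exact hf p hp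
  have hm : ∀ a b, (a, b) ∈ R1 ↔ (a = x1 ∧ (x0, b) ∈ R) ∨ (a ≠ x0 ∧ (a, b) ∈ R) :=
    fun a b => by rw [he]; exact mem_vmap hf a b
  refine push_core hR hR1 {x0, x1} ?_ ?_ ?_ hs
  · intro x y hxy hE
    rw [hm] at hxy
    simp only [Finset.mem_insert, Finset.mem_singleton] at hE
    clear * - hxy hE; tauto
  · intro x y hxy hE
    obtain ⟨-, c, hc, hr⟩ := (isDiag_iff _).1 hR1 _ _ hxy
    have h1 : (c, y) ∈ R1 := (hr c).2 (Or.inr rfl)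
    refine ⟨c, ?_, h1⟩
    rw [hm] at hxy h1
    simp only [Finset.mem_insert, Finset.mem_singleton] at hE ⊢
    clear * - hxy hE h1 hc hne; grind
  · intro x y x' y' hx' h1 h2 h3
    simp only [Finset.mem_insert, Finset.mem_singleton] at hx'
    have b0 := h3 x0 (by simp); have b1 := h3 x1 (by simp)
    refine Relation.ReflTransGen.single (Or.inl ⟨diag_stab hR h1, diag_stab hR1 h2, vmap x0 x1,
      Or.inl ⟨x0, x1, ?_, ?_, rfl⟩, ?_⟩)
    · obtain ⟨⟨a, b⟩, hp, rfl⟩ := hx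
      refine ⟨(a, b), ?_, rfl⟩
      rw [mem_stab]
      right; right; right
      refine ⟨?_, hp⟩
      clear * - hx'; grind
    · have hxR := h1.mem
      unfold Bet at b0 b1
      rcases h with ⟨ha, hb⟩ | ⟨ha, hb⟩
      · left
        have a1 := ha _ hxR; have a2 := hb _ hxR (by clear * - hx'; grind)
        simp only at a1 a2
        constructor
        · rintro ⟨p, q⟩ hp
          rw [mem_stab] at hp
          have := ha (p, q)
          simp only at this ⊢
          clear * - a1 a2 b0 b1 hp this hx'; grind
        · rintro ⟨p, q⟩ hp
          rw [mem_stab] at hp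
          have := hb (p, q)
          simp only at this ⊢
          clear * - a1 a2 b0 b1 hp this hx'; grind
      · right
        have a1 := ha _ hxR; have a2 := hb _ hxR (by clear * - hx'; grind)
        simp only at a1 a2
        constructor
        · rintro ⟨p, q⟩ hp
          rw [mem_stab] at hp
          have := ha (p, q)
          simp only at this ⊢
          clear * - a1 a2 b0 b1 hp this hx'; grind
        · rintro ⟨p, q⟩ hp
          rw [mem_stab] at hp
          have := hb (p, q)
          simp only at this ⊢
          clear * - a1 a2 b0 b1 hp this hx'; grind
    · ext ⟨p, q⟩
      rw [mem_vmap]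
      · simp only [mem_stab, hm]
        have := b0.1; have := b1.1
        clear * - hx' b0 b1 hne; grind
      · rintro ⟨p, q⟩ hp
        rw [mem_stab] at hp
        have h4 := b1.1; have h5 := hf (p, q)
        simp only at h5 ⊢
        clear * - hx' hp h4 h5; grind

theorem push_comm_v {R R1 : Finset Pt} (hR : IsDiagram R) (hR1 : IsDiagram R1) (x1 x2 : ℝ)
    (hn : x1 ≠ x2) (ha : ∃ p ∈ R, p.1 = x1) (hb : ∃ p ∈ R, p.1 = x2)
    (hc : ∀ p ∈ R, ¬ (min x1 x2 < p.1 ∧ p.1 < max x1 x2))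
    (hd : ∀ p ∈ R, ∀ q ∈ R, p.1 = x1 → q.1 = x2 → p.2 ≠ q.2)
    (hi : NoInterleaveV R x1 x2) (he : R1 = R.image (swapv x1 x2))
    {t : StabType} {R2 : Finset Pt} (hs : StabMove t R1 R2) :
    ∃ R', StabMove t R R' ∧ EE R' R2 := by
  have hm : ∀ a b, (a, b) ∈ R1 ↔ (a = x1 ∧ (x2, b) ∈ R) ∨ (a = x2 ∧ (x1, b) ∈ R) ∨
      (a ≠ x1 ∧ a ≠ x2 ∧ (a, b) ∈ R) := fun a b => by rw [he]; exact mem_swapv a b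
  refine push_core hR hR1 {x1, x2} ?_ ?_ ?_ hs
  · intro x y hxy hE
    rw [hm] at hxy
    simp only [Finset.mem_insert, Finset.mem_singleton] at hE
    clear * - hxy hE; tauto
  · intro x y hxy hE
    obtain ⟨-, c, hc, hr⟩ := (isDiag_iff _).1 hR1 _ _ hxy
    have h1 : (c, y) ∈ R1 := (hr c).2 (Or.inr rfl)
    refine ⟨c, ?_, h1⟩
    rw [hm] at hxy h1
    have h2 := hd (x1, y)
    have h3 := fun h => hd (x1, y) h (x2, y)
    simp only [Finset.mem_insert, Finset.mem_singleton] at hE h3 ⊢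
    clear * - hxy hE h1 hc hn h3; grind
  · intro x y x' y' hx' h1 h2 h3
    simp only [Finset.mem_insert, Finset.mem_singleton] at hx'
    have b0 := h3 x1 (by simp); have b1 := h3 x2 (by simp)
    have c1 : ∀ q, (x1, q) ∈ stabSet x y x' y' R ↔ (x1, q) ∈ R := by
      intro q; rw [mem_stab]; have := b0.1; clear * - hx' this; grind
    have c2 : ∀ q, (x2, q) ∈ stabSet x y x' y' R ↔ (x2, q) ∈ R := by
      intro q; rw [mem_stab]; have := b1.1; clear * - hx' this; grind
    refine Relation.ReflTransGen.single (Or.inr ⟨diag_stab hR h1, diag_stab hR1 h2, swapv x1 x2,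
      Or.inl ⟨x1, x2, hn, ?_, ?_, ?_, ?_, ?_, rfl⟩, ?_⟩)
    · obtain ⟨⟨a, b⟩, hp, rfl⟩ := ha
      exact ⟨(a, b), (c1 _).2 hp, rfl⟩
    · obtain ⟨⟨a, b⟩, hp, rfl⟩ := hb
      exact ⟨(a, b), (c2 _).2 hp, rfl⟩
    · rintro ⟨p, q⟩ hp
      have h5 := hc (x, y) h1.mem
      have h4 := hc (p, q)
      rw [bet_iff] at h4 h5 ⊢
      rw [mem_stab] at hp
      unfold Bet at *
      simp only at h4 h5 ⊢
      clear * - hp h4 h5 b0 b1 hx'; grind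
    · rintro ⟨a, b⟩ hp ⟨c, d⟩ hq e1 e2
      simp only at e1 e2
      subst e1 e2
      exact hd _ ((c1 _).1 hp) _ ((c2 _).1 hq) rfl rfl
    · rintro ⟨a, b⟩ hp ⟨a', b'⟩ hp' ⟨c, d⟩ hq ⟨c', d'⟩ hq' e1 e2 e3 e4
      simp only at e1 e2 e3 e4
      subst e1 e2 e3 e4
      exact hi _ ((c1 _).1 hp) _ ((c1 _).1 hp') _ ((c2 _).1 hq) _ ((c2 _).1 hq') rfl rfl rfl rfl
    · ext ⟨p, q⟩
      rw [mem_swapv, c1, c2, mem_stab, mem_stab, hm]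
      have h4 := b0.1; have h5 := b1.1
      clear * - hx' h4 h5 hn; grind

theorem push {R R1 R2 : Finset Pt} {t : StabType} (h : ExchangeMove R R1) (hs : StabMove t R1 R2) :
    ∃ R', StabMove t R R' ∧ EE R' R2 := by
  have fin : (∃ R', StabMove t (T R) R' ∧ EE R' (T R2)) → ∃ R', StabMove t R R' ∧ EE R' R2 := by
    rintro ⟨R', h1, h2⟩
    refine ⟨T R', ?_, ?_⟩
    · have := stab_T h1; rwa [T_T] at this
    · have := EE_T h2; rwa [T_T] at this
  rcases h with ⟨h1, h2, f, hf, he⟩ | ⟨h1, h2, f, hf, he⟩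
  · rcases hf with ⟨x0, x1, ha, hb, rfl⟩ | ⟨x0, x1, ha, hb, rfl⟩
    · exact push_cyc_v h1 h2 x0 x1 ha hb he hs
    · apply fin
      refine push_cyc_v (diag_T h1) (diag_T h2) x0 x1 ?_ ?_ ?_ (stab_T hs)
      · simpa only [exists_T, Prod.fst_swap]
      · simpa only [forall_T, Prod.fst_swap]
      · rw [he, T_image, hmap_T]
  · rcases hf with ⟨x0, x1, hn, ha, hb, hc, hd, hi, rfl⟩ | ⟨x0, x1, hn, ha, hb, hc, hd, hi, rfl⟩
    · exact push_comm_v h1 h2 x0 x1 hn ha hb hc hd hi he hs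
    · apply fin
      refine push_comm_v (diag_T h1) (diag_T h2) x0 x1 hn ?_ ?_ ?_ ?_ ?_ ?_ (stab_T hs)
      · simpa only [exists_T, Prod.fst_swap]
      · simpa only [exists_T, Prod.fst_swap]
      · simpa only [forall_T, Prod.fst_swap]
      · simpa only [forall_T, Prod.fst_swap]
      · unfold NoInterleaveV; unfold NoInterleaveH at hi
        simpa only [forall_T, Prod.fst_swap]
      · rw [he, T_image, swaph_T]

theorem pushE {R R1 : Finset Pt} {t : StabType} (h : EE R R1) :
    ∀ {R2}, StabMove t R1 R2 → ∃ R', StabMove t R R' ∧ EE R' R2 := by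
  induction h with
  | refl => exact fun hs => ⟨_, hs, Relation.ReflTransGen.refl⟩
  | tail _ h2 ih =>
    intro R2 hs
    obtain ⟨R', h3, h4⟩ := push h2 hs
    obtain ⟨R'', h5, h6⟩ := ih h3
    exact ⟨R'', h5, h6.trans h4⟩

theorem flip2 {x x' y y' c c' d d' : ℝ} (nx : x ≠ x') (ny : y ≠ y') (h1 : c < c' ↔ x' < x)
    (h2 : d < d' ↔ y' < y) : (c < c' ↔ d < d') ↔ (x < x' ↔ y < y') := by
  rw [h1, h2]
  have : (x' < x) ↔ ¬ (x < x') := by clear * - nx; grind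
  have : (y' < y) ↔ ¬ (y < y') := by clear * - ny; grind
  tauto

theorem away {R : Finset Pt} (hR : IsDiagram R) {a b a' b' : ℝ} (h : SV R a b a' b') (x y : ℝ) :
    ∃ c d c' d', SV R c d c' d' ∧ ((c < c' ↔ d < d') ↔ (a < a' ↔ b < b')) ∧ c ≠ x ∧ d ≠ y ∧
      EE (stabSet a b a' b' R) (stabSet c d c' d' R) := by
  have st1 : ∃ c c' d', SV R c b c' d' ∧ ((c < c' ↔ b < d') ↔ (a < a' ↔ b < b')) ∧ c ≠ x ∧
      EE (stabSet a b a' b' R) (stabSet c b c' d' R) := by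
    by_cases e : a = x
    · obtain ⟨-, c, hc, hr⟩ := (isDiag_iff _).1 hR _ _ h.mem
      obtain ⟨c', d', h1, h2, h3, h4⟩ := flex_row hR h ((hr c).2 (Or.inr rfl)) hc
      exact ⟨c, c', d', h1, flip2 h.nx h.ny h2 h3, e ▸ hc, h4⟩
    · exact ⟨a, a', b', h, Iff.rfl, e, Relation.ReflTransGen.refl⟩
  obtain ⟨c, c', d', h1, h2, h3, h4⟩ := st1
  by_cases e : b = y
  · obtain ⟨⟨d, hd, hr⟩, -⟩ := (isDiag_iff _).1 hR _ _ h1.mem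
    obtain ⟨c'', d'', k1, k2, k3, k4⟩ := flex_col hR h1 ((hr d).2 (Or.inr rfl)) hd
    exact ⟨c, d, c'', d'', k1, (flip2 h1.nx h1.ny k3 k2).trans h2, h3, e ▸ hd, h4.trans k4⟩
  · exact ⟨c, b, c', d', h1, h2, h3, e, h4⟩

theorem bet_aux {x x'' c c' : ℝ} (h1 : ¬ Bet x x'' c) (h2 : ¬ Bet x x'' c') (h3 : ¬ Bet c c' x)
    (n1 : x ≠ c) (n2 : x ≠ c') (n3 : c ≠ x'') (n4 : c' ≠ x'') : ¬ Bet c c' x'' := by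
  unfold Bet at *; grind

theorem cross {R1 R R2 : Finset Pt} {s t : StabType} (hs : StabMove s R1 R) (ht : StabMove t R1 R2) :
    ∃ S S', StabMove t R S ∧ EE S S' ∧ StabMove s R2 S' := by
  rw [stab_iff] at hs ht
  obtain ⟨hR1, a, b, a', b', hv, hst, rfl⟩ := hs
  obtain ⟨-, x, y, x', y', hw, htt, rfl⟩ := ht
  obtain ⟨c, d, c', d', h1, h2, h3, h4, h5⟩ := away hR1 hv x y
  obtain ⟨x'', y'', -, k1, k2, k3, k4, k5, k6⟩ := near hR1 hw.mem hw {c, c'} {d, d'}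
  have e1 := k4 c (by simp); have e2 := k4 c' (by simp)
  have e3 := k5 d (by simp); have e4 := k5 d' (by simp)
  have w1 : SV (stabSet c d c' d' R1) x y x'' y'' := by
    constructor
    · rw [mem_stab]; right; right; right
      exact ⟨fun h => h3 h.1.symm, hw.mem⟩
    · exact k1.nx
    · exact k1.ny
    · intro p q hp; rw [mem_stab] at hp
      rcases hp with ⟨rfl, rfl⟩ | ⟨rfl, rfl⟩ | ⟨rfl, rfl⟩ | ⟨_, hp⟩
      exacts [e2.1, e1.1, e2.1, k1.fx _ _ hp]
    · intro p q hp; rw [mem_stab] at hp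
      rcases hp with ⟨rfl, rfl⟩ | ⟨rfl, rfl⟩ | ⟨rfl, rfl⟩ | ⟨_, hp⟩
      exacts [e3.1, e4.1, e4.1, k1.fy _ _ hp]
    · intro p q hp; rw [mem_stab] at hp
      rcases hp with ⟨rfl, rfl⟩ | ⟨rfl, rfl⟩ | ⟨rfl, rfl⟩ | ⟨_, hp⟩
      exacts [e2.2, e1.2, e2.2, k1.gx _ _ hp]
    · intro p q hp; rw [mem_stab] at hp
      rcases hp with ⟨rfl, rfl⟩ | ⟨rfl, rfl⟩ | ⟨rfl, rfl⟩ | ⟨_, hp⟩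
      exacts [e3.2, e4.2, e4.2, k1.gy _ _ hp]
  have u1 := h1.gx _ _ hw.mem
  have u2 := h1.gy _ _ hw.mem
  have u3 := h1.fx _ _ hw.mem
  have u4 := h1.fy _ _ hw.mem
  have bx := bet_aux e1.2 e2.2 u1 h3.symm u3 e1.1 e2.1
  have bY := bet_aux e3.2 e4.2 u2 h4.symm u4 e3.1 e4.1
  have w2 : SV (stabSet x y x'' y'' R1) c d c' d' := by
    constructor
    · rw [mem_stab]; right; right; right
      exact ⟨fun h => h3 h.1, h1.mem⟩
    · exact h1.nx
    · exact h1.ny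
    · intro p q hp; rw [mem_stab] at hp
      rcases hp with ⟨rfl, rfl⟩ | ⟨rfl, rfl⟩ | ⟨rfl, rfl⟩ | ⟨_, hp⟩
      exacts [e2.1.symm, u3, e2.1.symm, h1.fx _ _ hp]
    · intro p q hp; rw [mem_stab] at hp
      rcases hp with ⟨rfl, rfl⟩ | ⟨rfl, rfl⟩ | ⟨rfl, rfl⟩ | ⟨_, hp⟩
      exacts [u4, e4.1.symm, e4.1.symm, h1.fy _ _ hp]
    · intro p q hp; rw [mem_stab] at hp
      rcases hp with ⟨rfl, rfl⟩ | ⟨rfl, rfl⟩ | ⟨rfl, rfl⟩ | ⟨_, hp⟩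
      exacts [bx, u1, bx, h1.gx _ _ hp]
    · intro p q hp; rw [mem_stab] at hp
      rcases hp with ⟨rfl, rfl⟩ | ⟨rfl, rfl⟩ | ⟨rfl, rfl⟩ | ⟨_, hp⟩
      exacts [u2, bY, bY, h1.gy _ _ hp]
  have eq : stabSet x y x'' y'' (stabSet c d c' d' R1) = stabSet c d c' d' (stabSet x y x'' y'' R1) := by
    ext ⟨p, q⟩
    simp only [mem_stab]
    have n1 := e1.1; have n2 := e3.1
    clear * - h3 h4 n1 n2 u3 u4; grind
  have m1 : StabMove t (stabSet c d c' d' R1) (stabSet x y x'' y'' (stabSet c d c' d' R1)) := by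
    rw [stab_iff]
    exact ⟨diag_stab hR1 h1, x, y, x'', y'', w1, by rw [htt, same_lt k2, same_lt k3], rfl⟩
  have m2 : StabMove s (stabSet x y x'' y'' R1) (stabSet x y x'' y'' (stabSet c d c' d' R1)) := by
    rw [stab_iff]
    exact ⟨diag_stab hR1 k1, c, d, c', d', w2, by rw [hst, h2], eq⟩
  obtain ⟨S, s1, s2⟩ := pushE h5 m1
  obtain ⟨S', s3, s4⟩ := pushE k6 m2
  exact ⟨S, S', s1, s2.trans (EE_symm s4), s3⟩

/-! combinatorics of sequences -/

theorem seq_append (L L' : List MoveLabel) (R R' S : Finset Pt) (h : IsMoveSeq L R S)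
    (h' : IsMoveSeq L' S R') : IsMoveSeq (L ++ L') R R' := by
  induction L generalizing R with
  | nil => cases h; exact h'
  | cons l L ih =>
    obtain ⟨Q, h1, h2⟩ := h
    exact ⟨Q, h1, ih _ h2⟩

theorem EE_seq {R R' : Finset Pt} (h : EE R R') : ∃ M : List MoveLabel, IsMoveSeq M R R' ∧
    ∀ l ∈ M, l = MoveLabel.cyclic ∨ l = MoveLabel.comm := by
  induction h using Relation.ReflTransGen.head_induction_on with
  | refl => exact ⟨[], rfl, by simp⟩
  | head h1 _ ih =>
    obtain ⟨M, h2, h3⟩ := ih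
    rcases h1 with h1 | h1
    · exact ⟨.cyclic :: M, ⟨_, h1, h2⟩, by simpa using h3⟩
    · exact ⟨.comm :: M, ⟨_, h1, h2⟩, by simpa using h3⟩

theorem EE_stabs (A : List StabType) {R S S' : Finset Pt} (h : EE R S)
    (hA : IsMoveSeq (A.map MoveLabel.stab) S S') :
    ∃ Q, IsMoveSeq (A.map MoveLabel.stab) R Q ∧ EE Q S' := by
  induction A generalizing R S with
  | nil => cases hA; exact ⟨R, rfl, h⟩
  | cons t A ih =>
    obtain ⟨U, h1, h2⟩ := hA
    obtain ⟨V, h3, h4⟩ := pushE h h1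
    obtain ⟨Q, h5, h6⟩ := ih h4 h2
    exact ⟨Q, ⟨V, h3, h5⟩, h6⟩

theorem destab_stabs (A : List StabType) {s : StabType} {R S S' : Finset Pt} (h : StabMove s S R)
    (hA : IsMoveSeq (A.map MoveLabel.stab) S S') :
    ∃ Q Q', IsMoveSeq (A.map MoveLabel.stab) R Q ∧ EE Q Q' ∧ StabMove s S' Q' := by
  induction A generalizing R S with
  | nil => cases hA; exact ⟨R, R, rfl, Relation.ReflTransGen.refl, h⟩
  | cons t A ih =>
    obtain ⟨U, h1, h2⟩ := hA
    obtain ⟨V, V', h3, h4, h5⟩ := cross h h1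
    obtain ⟨Q, Q', h6, h7, h8⟩ := ih h5 h2
    obtain ⟨W, h9, h10⟩ := EE_stabs A h4 h6
    exact ⟨W, Q', ⟨V, h3, h9⟩, h10.trans h7, h8⟩

theorem main_form (L : List MoveLabel) : ∀ R R' : Finset Pt, IsMoveSeq L R R' →
    ∃ (A Z : List StabType) (S S' : Finset Pt), IsMoveSeq (A.map MoveLabel.stab) R S ∧ EE S S' ∧
      IsMoveSeq (Z.map MoveLabel.destab) S' R' ∧
      (∀ t, A.count t = L.count (MoveLabel.stab t)) ∧
      (∀ t, Z.count t = L.count (MoveLabel.destab t)) := by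
  induction L with
  | nil =>
    rintro R R' h
    exact ⟨[], [], R, R, rfl, Relation.ReflTransGen.refl, h, by simp, by simp⟩
  | cons l L ih =>
    rintro R R' ⟨U, hl, hL⟩
    obtain ⟨A, Z, S, S', h1, h2, h3, h4, h5⟩ := ih _ _ hL
    have ex : ExchangeMove R U → ∃ S, IsMoveSeq (A.map MoveLabel.stab) R S ∧ EE S S' := by
      intro h
      obtain ⟨Q, k1, k2⟩ := EE_stabs A (Relation.ReflTransGen.single h) h1
      exact ⟨Q, k1, k2.trans h2⟩
    cases l with
    | cyclic =>
      obtain ⟨Q, k1, k2⟩ := ex (Or.inl hl)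
      exact ⟨A, Z, Q, S', k1, k2, h3, by simpa using h4, by simpa using h5⟩
    | comm =>
      obtain ⟨Q, k1, k2⟩ := ex (Or.inr hl)
      exact ⟨A, Z, Q, S', k1, k2, h3, by simpa using h4, by simpa using h5⟩
    | stab t =>
      refine ⟨t :: A, Z, S, S', ⟨U, hl, h1⟩, h2, h3, ?_, by simpa using h5⟩
      intro u
      rw [List.count_cons, List.count_cons, h4]
      simp
    | destab s =>
      obtain ⟨Q, Q', k1, k2, k3⟩ := destab_stabs A hl h1
      obtain ⟨W, k4, k5⟩ := pushE (EE_symm h2) k3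
      refine ⟨A, s :: Z, Q, W, k1, k2.trans (EE_symm k5), ⟨S', k4, h3⟩, by simpa using h4, ?_⟩
      intro u
      rw [List.count_cons, List.count_cons, h5]
      simp

theorem length_two (A : List StabType) : A.length = A.count StabType.I + A.count StabType.II := by
  induction A with
  | nil => rfl
  | cons t A ih => cases t <;> simp [ih] <;> omega

/-- **Lemma (stabilizations can be moved to the start).**  Any sequence of elementary moves
containing `k` stabilizations and `l` destabilizations can be replaced by a sequence with the
same endpoints in which the first `k` moves are stabilizations, the last `l` moves are
destabilizations, all other moves are cyclic permutations and commutations, and the number of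
stabilizations and destabilizations of each type is the same as in the original sequence. -/
theorem stabilizations_to_start (L : List MoveLabel) (R₀ Rm : Finset Pt)
    (h : IsMoveSeq L R₀ Rm) :
    ∃ A M Z : List MoveLabel,
      IsMoveSeq (A ++ M ++ Z) R₀ Rm ∧
      (∀ l ∈ A, ∃ t, l = MoveLabel.stab t) ∧
      (∀ l ∈ M, l = MoveLabel.cyclic ∨ l = MoveLabel.comm) ∧
      (∀ l ∈ Z, ∃ t, l = MoveLabel.destab t) ∧
      A.length = L.count (MoveLabel.stab StabType.I) + L.count (MoveLabel.stab StabType.II) ∧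
      Z.length = L.count (MoveLabel.destab StabType.I) + L.count (MoveLabel.destab StabType.II) ∧
      (∀ t, (A ++ M ++ Z).count (MoveLabel.stab t) = L.count (MoveLabel.stab t)) ∧
      (∀ t, (A ++ M ++ Z).count (MoveLabel.destab t) = L.count (MoveLabel.destab t)) := by
  obtain ⟨A, Z, S, S', h1, h2, h3, h4, h5⟩ := main_form L _ _ h
  obtain ⟨M, m1, m2⟩ := EE_seq h2
  have i1 : Function.Injective MoveLabel.stab := fun a b h => by injection h
  have i2 : Function.Injective MoveLabel.destab := fun a b h => by injection h
  refine ⟨A.map .stab, M, Z.map .destab, seq_append _ _ _ _ _ (seq_append _ _ _ _ _ h1 m1) h3,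
    ?_, m2, ?_, ?_, ?_, ?_, ?_⟩
  · intro l hl; obtain ⟨t, _, rfl⟩ := List.mem_map.1 hl; exact ⟨t, rfl⟩
  · intro l hl; obtain ⟨t, _, rfl⟩ := List.mem_map.1 hl; exact ⟨t, rfl⟩
  · rw [List.length_map, length_two, h4, h4]
  · rw [List.length_map, length_two, h5, h5]
  · intro t
    have e1 : M.count (MoveLabel.stab t) = 0 := List.count_eq_zero.2 fun hm => by
      simpa using m2 _ hm
    have e2 : (Z.map MoveLabel.destab).count (MoveLabel.stab t) = 0 :=
      List.count_eq_zero.2 fun hm => by simp at hm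
    rw [List.count_append, List.count_append, e1, e2, List.count_map_of_injective _ _ i1, h4]
    rfl
  · intro t
    have e1 : M.count (MoveLabel.destab t) = 0 := List.count_eq_zero.2 fun hm => by
      simpa using m2 _ hm
    have e2 : (A.map MoveLabel.stab).count (MoveLabel.destab t) = 0 :=
      List.count_eq_zero.2 fun hm => by simp at hm
    rw [List.count_append, List.count_append, e1, e2, List.count_map_of_injective _ _ i2, h5]
    simp
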